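/- Let G = A₁ ∗_C A₋₁ be a word hyperbolic group which is the amalgamated free product of A₁ and A₋₁ along a virtually cyclic subgroup C. For i = ±1 let Xᵢ be a finite generating set of Aᵢ, closed under inversion and containing a finite generating set 𝒞 of C closed under inversion, and put 𝒢 = X₁ ∪ X₋₁. Then there exists a constant K > 0 such that every g ∈ G is represented by a word u = u₀u₁…u_s over 𝒢 which is K-quasigeodesic with respect to d_𝒢 and satisfies: (i) each u_k is a d_{X_j}-geodesic word for some j ∈ {1, −1}, and for k > 0 the element ū_k does not belong to C and is shortest with respect to d_{X_j} in the coset C·ū_k; (ii) if ū_k ∈ A_j − C then ū_{k−1} ∈ A_{−j} − C for k = 1,…,s; (iii) if s = 0 and g ∈ C then u₀ is a d_{X₁}-geodesic word representing g. -/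

import Mathlib

universe u v w

section Defs

variable {G : Type u} [Group G]

/-- A finite generating set closed under inversion. -/
def IsSymmGen (X : Set G) : Prop :=
  X.Finite ∧ (∀ x ∈ X, x⁻¹ ∈ X) ∧ Subgroup.closure X = ⊤

/-- Word length of `g` with respect to `X`. -/
noncomputable def wordLength (X : Set G) (g : G) : ℕ :=
  sInf {n : ℕ | ∃ l : List G, l.length = n ∧ (∀ x ∈ l, x ∈ X) ∧ l.prod = g}

/-- Word metric. -/
noncomputable def wordDist (X : Set G) (g h : G) : ℕ :=
  wordLength X (g⁻¹ * h)

/-- Gromov product with respect to the word metric. -/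
noncomputable def gromovProd (X : Set G) (x y w : G) : ℝ :=
  ((wordDist X x w : ℝ) + (wordDist X y w : ℝ) - (wordDist X x y : ℝ)) / 2

end Defs

/-- A group is word hyperbolic if for some finite symmetric generating set the Gromov
product satisfies the hyperbolicity inequality. -/
def IsWordHyperbolic (G : Type u) [Group G] : Prop :=
  ∃ X : Set G, IsSymmGen X ∧ ∃ δ : ℝ, 0 ≤ δ ∧
    ∀ x y z w : G,
      gromovProd X x z w ≥ min (gromovProd X x y w) (gromovProd X y z w) - δ

/-- A subgroup is quasiconvex: it is finitely generated and word lengths distort linearly. -/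
def IsQuasiconvex {G : Type u} [Group G] (A : Subgroup G) : Prop :=
  ∃ Y : Set ↥A, IsSymmGen Y ∧ ∃ X : Set G, IsSymmGen X ∧ ∃ c : ℝ, 0 < c ∧
    ∀ a : ↥A, (wordLength Y a : ℝ) ≤ c * (wordLength X (a : G) : ℝ) + c

/-- Property (Q): every finitely generated subgroup is quasiconvex. -/
def HasPropertyQ (G : Type u) [Group G] : Prop :=
  ∀ H : Subgroup G, H.FG → IsQuasiconvex H

/-- A group is virtually cyclic if it has a cyclic subgroup of finite index. -/
def IsVirtuallyCyclic (C : Type u) [Group C] : Prop :=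
  ∃ Z : Subgroup C, IsCyclic ↥Z ∧ Z.FiniteIndex

/-- `G` is the amalgamated free product of its subgroups `A` and `B` along `C`:
`C = A ⊓ B`, `A ⊔ B = ⊤` and `G` has the pushout universal property. -/
structure IsAmalgamatedFreeProduct {G : Type u} [Group G] (A B C : Subgroup G) : Prop where
  le_left : C ≤ A
  le_right : C ≤ B
  inf_eq : A ⊓ B = C
  sup_eq_top : A ⊔ B = ⊤
  univ : ∀ (K : Type u) [Group K] (f : ↥A →* K) (g : ↥B →* K),
    (∀ (c : G) (hA : c ∈ A) (hB : c ∈ B), f ⟨c, hA⟩ = g ⟨c, hB⟩) →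
    ∃ h : G →* K, (∀ a : ↥A, h a = f a) ∧ (∀ b : ↥B, h b = g b)

section Words

variable {G : Type u} [Group G]

/-- A word over the alphabet `X`. -/
def IsWordOver (X : Set G) (l : List G) : Prop := ∀ x ∈ l, x ∈ X

/-- A geodesic word over `X`. -/
def IsGeodesicWord (X : Set G) (l : List G) : Prop :=
  IsWordOver X l ∧ l.length = wordLength X l.prod

/-- A `lam`-quasigeodesic word over `X`: every subword `v` satisfies
`l(v) ≤ lam * l_X(v̄) + lam`. -/
def IsQuasigeodesicWord (X : Set G) (lam : ℝ) (l : List G) : Prop :=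
  IsWordOver X l ∧
    ∀ v : List G, v <:+: l → (v.length : ℝ) ≤ lam * (wordLength X v.prod : ℝ) + lam

/-- `g` is a shortest element of the subset `S` with respect to `wordLength X`. -/
def ShortestIn (X : Set G) (g : G) (S : Set G) : Prop :=
  g ∈ S ∧ ∀ s ∈ S, wordLength X g ≤ wordLength X s

end Words

/-- `G` together with `ια, ιβ` is the pushout of `ℤ → A, 1 ↦ x` and `ℤ → B, 1 ↦ y`. -/
structure IsAmalgamOverZ {A : Type u} {B : Type v} {G : Type w}
    [Group A] [Group B] [Group G]
    (ια : A →* G) (ιβ : B →* G) (x : A) (y : B) : Prop where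
  comm : ια x = ιβ y
  gen : ια.range ⊔ ιβ.range = ⊤
  univ : ∀ (K : Type (max u v w)) [Group K] (f : A →* K) (g : B →* K),
    f x = g y → ∃ h : G →* K, h.comp ια = f ∧ h.comp ιβ = g

/-!
In the word metric of a hyperbolic group, some power of an element of infinite order spans a rough
geodesic, and nearest-point projection to a rough geodesic is contracting. Hence so is projection to
the virtually cyclic group `C`, and each coset `a C` either has bounded projection to `C` or is
close to `C`. The projection to `C` of a syllable that is shortest in its coset of `C` therefore
drifts sublinearly, so moving elements `c`, `c'` of `C` across it changes lengths by an amount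
linearly bounded in the syllable. A geodesic of the amalgam passes through `C` between any two
syllables of a normal form; adding up these estimates along it bounds the length of the normal form
linearly by that of the geodesic. Subwords of normal forms are again normal forms, which turns the
bound into quasigeodesicity.
-/

section Length

variable {G : Type u} [Group G]

/-- A length function on a group; the distance it stands for is `(x, y) ↦ ℓ (x⁻¹ * y)`. Elements
other than `1` may have length zero. -/
structure IsLength (ℓ : G → ℕ) : Prop where
  one : ℓ 1 = 0
  inv : ∀ g, ℓ g⁻¹ = ℓ g
  mul : ∀ g h, ℓ (g * h) ≤ ℓ g + ℓ h

/-- A length function whose left-invariant metric is proper, discretely geodesic and satisfies the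
four-point condition for hyperbolicity. -/
structure IsHyperbolicLength (ℓ : G → ℕ) (δ : ℕ) : Prop extends IsLength ℓ where
  four : ∀ x y z w,
    ℓ (x⁻¹ * z) + ℓ (y⁻¹ * w) ≤ ℓ (x⁻¹ * y) + ℓ (z⁻¹ * w) + 2 * δ ∨
      ℓ (x⁻¹ * z) + ℓ (y⁻¹ * w) ≤ ℓ (y⁻¹ * z) + ℓ (x⁻¹ * w) + 2 * δ
  ball : ∀ n, {g | ℓ g ≤ n}.Finite
  geod : ∀ g r, r ≤ ℓ g → ∃ y, ℓ y = r ∧ ℓ (y⁻¹ * g) + r = ℓ g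

/-- The orbit `n ↦ z ^ n` of the base point is a rough geodesic that goes to infinity. -/
structure IsAxis (ℓ : G → ℕ) (z : G) (D : ℕ) : Prop where
  add : ∀ m n : ℕ, ℓ (z ^ m) + ℓ (z ^ n) ≤ ℓ (z ^ (m + n)) + D
  le : ∀ n : ℕ, n ≤ ℓ (z ^ n) + D

/-- `g` is a shortest element of the coset `C g`; equivalently, `1` is a nearest-point projection of
`g` to `C`. -/
def IsCosetMin (ℓ : G → ℕ) (C : Subgroup G) (g : G) : Prop := ∀ c ∈ C, ℓ g ≤ ℓ (c * g)

/-- Nearest-point projection to `C` is strongly contracting: two points `g` and `c * g'` projecting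
to `1` and `c` either have close projections, or are joined by a path running through the
projections. -/
def IsContracting (ℓ : G → ℕ) (C : Subgroup G) : Prop :=
  ∃ E : ℕ, ∀ ⦃g g' : G⦄, IsCosetMin ℓ C g → IsCosetMin ℓ C g' → ∀ c ∈ C,
    ℓ c ≤ E ∨ ℓ g + ℓ c + ℓ g' ≤ ℓ (g⁻¹ * (c * g')) + E

/-- The coset `a C` either projects to a bounded subset of `C`, or is close to `C`. Here `1` and
`c'` are projections of the points `a` and `a * c = c' * b` of `a C`. -/
def HasSeparatedCosets (ℓ : G → ℕ) (C : Subgroup G) : Prop :=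
  ∃ K : ℕ, ∀ ⦃a b : G⦄, IsCosetMin ℓ C a → IsCosetMin ℓ C b →
    ∀ c ∈ C, ∀ c' ∈ C, a * c = c' * b → ℓ c' ≤ K ∨ ℓ a ≤ K

/-- The largest displacement of the base point under the powers `t ^ k` with `k ≤ N`. -/
def maxDisplacement (ℓ : G → ℕ) (t : G) (N : ℕ) : ℕ :=
  (Finset.range (N + 1)).sup fun k => ℓ (t ^ k)

variable {ℓ : G → ℕ} {δ : ℕ}

namespace IsLength

theorem mul_inv_comm (h : IsLength ℓ) (x y : G) : ℓ (x⁻¹ * y) = ℓ (y⁻¹ * x) := by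
  rw [← h.inv (x⁻¹ * y), mul_inv_rev, inv_inv]

theorem le_mul_left (h : IsLength ℓ) (x y : G) : ℓ y ≤ ℓ x + ℓ (x * y) := by
  simpa only [inv_mul_cancel_left, h.inv] using h.mul x⁻¹ (x * y)

theorem le_mul_right (h : IsLength ℓ) (x y : G) : ℓ x ≤ ℓ (x * y) + ℓ y := by
  simpa only [mul_inv_cancel_right, h.inv] using h.mul (x * y) y⁻¹

theorem pow_le (h : IsLength ℓ) (x : G) (n : ℕ) : ℓ (x ^ n) ≤ n * ℓ x := by
  induction n with
  | zero => simp [h.one]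
  | succ n ih =>
    rw [pow_succ, Nat.succ_mul]
    exact (h.mul _ x).trans (Nat.add_le_add_right ih _)

theorem pow_le_of_le (h : IsLength ℓ) (x : G) {n m : ℕ} (hn : n ≤ m) : ℓ (x ^ n) ≤ m * ℓ x :=
  (h.pow_le x n).trans (Nat.mul_le_mul_right _ hn)

theorem zpow_natAbs (h : IsLength ℓ) (x : G) (n : ℤ) : ℓ (x ^ n) = ℓ (x ^ n.natAbs) := by
  obtain ⟨m, rfl | rfl⟩ := n.eq_nat_or_neg <;> simp [h.inv]

theorem zpow_le (h : IsLength ℓ) (x : G) (n : ℤ) : ℓ (x ^ n) ≤ n.natAbs * ℓ x :=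
  (h.zpow_natAbs x n).trans_le (h.pow_le x _)

theorem inv_pow_mul_pow_le (h : IsLength ℓ) {t : G} {N M : ℕ} (hM : ∀ k ≤ N, ℓ (t ^ k) ≤ M)
    {m k : ℕ} (hm : m ≤ N) (hk : k ≤ N) : ℓ ((t ^ m)⁻¹ * t ^ k) ≤ M := by
  wlog hmk : m ≤ k generalizing m k
  · rw [h.mul_inv_comm]
    exact this hk hm (le_of_not_ge hmk)
  obtain ⟨q, rfl⟩ := Nat.exists_eq_add_of_le hmk
  rw [pow_add, inv_mul_cancel_left]
  exact hM q (by omega)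

end IsLength

theorem length_pow_le_maxDisplacement (ℓ : G → ℕ) (t : G) {k N : ℕ} (hk : k ≤ N) :
    ℓ (t ^ k) ≤ maxDisplacement ℓ t N :=
  Finset.le_sup (f := fun k => ℓ (t ^ k)) (Finset.mem_range.2 (Nat.lt_succ_of_le hk))

theorem exists_length_pow_eq_maxDisplacement (ℓ : G → ℕ) (t : G) (N : ℕ) :
    ∃ k ≤ N, ℓ (t ^ k) = maxDisplacement ℓ t N := by
  obtain ⟨k, hk, h⟩ := Finset.exists_mem_eq_sup (Finset.range (N + 1)) (by simp) fun k => ℓ (t ^ k)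
  exact ⟨k, Nat.le_of_lt_succ (Finset.mem_range.1 hk), h.symm⟩

/-- Displacements become large because powers of `t` cannot all stay in a ball with fewer
elements. -/
theorem lt_maxDisplacement_of_card_ball {t : G} (ht : ¬IsOfFinOrder t) {R : ℕ}
    (hR : {g | ℓ g ≤ R}.Finite) : R < maxDisplacement ℓ t hR.toFinset.card := by
  by_contra! hle
  have hmem : Set.MapsTo (fun k => t ^ k) (Finset.range (hR.toFinset.card + 1)) hR.toFinset := by
    intro k hk
    have hk' : k ≤ hR.toFinset.card := Nat.le_of_lt_succ (by simpa using hk)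
    simpa using (length_pow_le_maxDisplacement ℓ t hk').trans hle
  obtain ⟨a, -, b, -, hab, heq⟩ :=
    Finset.exists_ne_map_eq_of_card_lt_of_maps_to (by simp) hmem
  exact hab (injective_pow_iff_not_isOfFinOrder.2 ht heq)

namespace IsHyperbolicLength

/-- If `y` is close to a geodesic `[1, p]`, and `[1, q]` follows `[1, p]` beyond `y`, then `y` is
close to `[1, q]`. -/
theorem near_geodesic_of_fellow_travel (h : IsHyperbolicLength ℓ δ) {y p q : G} {s : ℕ}
    (hp : ℓ (y⁻¹ * p) + ℓ y ≤ ℓ p + s) (hpq : 2 * ℓ y + ℓ (p⁻¹ * q) ≤ ℓ p + ℓ q + s) :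
    ℓ (y⁻¹ * q) + ℓ y ≤ ℓ q + (s + 2 * δ) := by
  have f := h.four y p q 1
  simp only [mul_one, h.inv] at f
  omega

/-- If `t` and its powers up to `N` are not yet expanding, but their displacements are large, then
moving the base point towards the farthest point among the `t ^ k` decreases all displacements. -/
theorem exists_maxDisplacement_conj_lt (h : IsHyperbolicLength ℓ δ) {t : G} {N c : ℕ}
    (hlarge : 4 * (4 * δ + 1) + c < maxDisplacement ℓ t N)
    (hc : ∀ k, ℓ (t ^ (2 * k)) ≤ ℓ (t ^ k) + c) :
    ∃ y, maxDisplacement ℓ (y⁻¹ * t * y) N < maxDisplacement ℓ t N := by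
  obtain ⟨m, hmN, hm⟩ := exists_length_pow_eq_maxDisplacement ℓ t N
  have hM : ∀ k ≤ N, ℓ (t ^ k) ≤ maxDisplacement ℓ t N :=
    fun k hk => length_pow_le_maxDisplacement ℓ t hk
  obtain ⟨y, hy, hym⟩ := h.geod (t ^ m) (4 * δ + 1) (by omega)
  refine ⟨y, ?_⟩
  obtain ⟨k, hkN, hk⟩ := exists_length_pow_eq_maxDisplacement ℓ (y⁻¹ * t * y) N
  have hconj : (y⁻¹ * t * y) ^ k = y⁻¹ * (t ^ k * y) := by
    simpa [mul_assoc] using conj_pow (i := k) (a := y⁻¹) (b := t)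
  rw [← hk, hconj]
  have hkM := hM k hkN
  rcases lt_or_ge (ℓ (t ^ k) + 2 * (4 * δ + 1)) (maxDisplacement ℓ t N) with hsmall | hbig
  · have h1 := h.mul y⁻¹ (t ^ k * y)
    have h2 := h.mul (t ^ k) y
    rw [h.inv] at h1
    omega
  have hmk := h.inv_pow_mul_pow_le hM hmN hkN
  have near : ℓ (y⁻¹ * t ^ k) + ℓ y ≤ ℓ (t ^ k) + (0 + 2 * δ) :=
    h.near_geodesic_of_fellow_travel (p := t ^ m) (by omega) (by omega)
  have near_inv : ℓ (y⁻¹ * (t ^ k)⁻¹) + ℓ y ≤ ℓ (t ^ k)⁻¹ + (2 * δ + 2 * δ) := by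
    refine h.near_geodesic_of_fellow_travel (p := t ^ k) (by omega) ?_
    have h1 : ℓ ((t ^ k)⁻¹ * (t ^ k)⁻¹) = ℓ (t ^ (2 * k)) := by
      rw [← mul_inv_rev, h.inv, ← pow_add, two_mul]
    have h2 := hc k
    rw [h1, h.inv]
    omega
  have f := h.four y 1 (t ^ k * y) (t ^ k)
  have h1 : ℓ ((t ^ k * y)⁻¹ * t ^ k) = ℓ y := by simp [h.inv]
  have h2 : ℓ (y⁻¹ * (t ^ k)⁻¹) = ℓ (t ^ k * y) := by rw [← h.inv (t ^ k * y), mul_inv_rev]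
  rw [h.inv (t ^ k), h2] at near_inv
  simp only [mul_one, inv_one, one_mul, h.inv, h1] at f
  omega

theorem exists_expanding_pow (h : IsHyperbolicLength ℓ δ) {g : G} (hg : ¬IsOfFinOrder g) (c : ℕ) :
    ∃ (x : G) (k : ℕ), ℓ ((x⁻¹ * g * x) ^ k) + c < ℓ ((x⁻¹ * g * x) ^ (2 * k)) := by
  let hR := h.ball (4 * (4 * δ + 1) + c)
  let F : G → ℕ := fun x => maxDisplacement ℓ (x⁻¹ * g * x) hR.toFinset.card
  by_contra! hcon
  have hx : ¬IsOfFinOrder ((Function.argmin F)⁻¹ * g * Function.argmin F) := fun hfin =>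
    hg (IsConj.isOfFinOrder (isConj_iff.2 ⟨Function.argmin F, by group⟩) hfin)
  obtain ⟨y, hy⟩ := h.exists_maxDisplacement_conj_lt (lt_maxDisplacement_of_card_ball hx hR)
    (hcon (Function.argmin F))
  refine hy.not_ge ?_
  simpa only [F, mul_inv_rev, mul_assoc] using Function.argmin_le F (Function.argmin F * y)

theorem expanding_succ (h : IsHyperbolicLength ℓ δ) {t : G}
    (ht : ℓ t + 4 * δ < ℓ (t ^ 2)) (n : ℕ) : ℓ (t ^ n) + 2 * δ + 1 ≤ ℓ (t ^ (n + 1)) := by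
  induction n with
  | zero =>
    have h2 := h.pow_le t 2
    simp only [pow_zero, h.one, zero_add, pow_one]
    omega
  | succ n ih =>
    have f := h.four 1 (t ^ n) (t ^ (n + 1)) (t ^ (n + 2))
    have g1 : (t ^ n)⁻¹ * t ^ (n + 2) = t ^ 2 := by rw [pow_add, inv_mul_cancel_left]
    have g2 : (t ^ n)⁻¹ * t ^ (n + 1) = t := by rw [pow_succ, inv_mul_cancel_left]
    have g3 : (t ^ (n + 1))⁻¹ * t ^ (n + 2) = t := by rw [pow_succ t (n + 1), inv_mul_cancel_left]
    simp only [inv_one, one_mul, g1, g2, g3] at f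
    change _ ≤ ℓ (t ^ (n + 2))
    omega

theorem expanding_add (h : IsHyperbolicLength ℓ δ) {t : G}
    (ht : ℓ t + 4 * δ < ℓ (t ^ 2)) (m n : ℕ) :
    ℓ (t ^ m) + ℓ (t ^ n) ≤ ℓ (t ^ (m + n)) + ℓ t := by
  rcases n with _ | n
  · simp [h.one]
  have f := h.four 1 (t ^ (m + (n + 1))) (t ^ (m + 1)) (t ^ m)
  have g1 : ℓ ((t ^ (m + (n + 1)))⁻¹ * t ^ m) = ℓ (t ^ (n + 1)) := by
    rw [h.mul_inv_comm, pow_add, inv_mul_cancel_left]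
  have g2 : ℓ ((t ^ (m + 1))⁻¹ * t ^ m) = ℓ t := by
    rw [h.mul_inv_comm, pow_succ, inv_mul_cancel_left]
  have g3 : ℓ ((t ^ (m + (n + 1)))⁻¹ * t ^ (m + 1)) = ℓ (t ^ n) := by
    rw [h.mul_inv_comm, show m + (n + 1) = m + 1 + n by omega, pow_add _ (m + 1),
      inv_mul_cancel_left]
  simp only [inv_one, one_mul, g1, g2, g3] at f
  have s1 := h.expanding_succ ht m
  have s2 := h.expanding_succ ht n
  omega

theorem isAxis_of_expanding (h : IsHyperbolicLength ℓ δ) {t : G} (ht : ℓ t + 4 * δ < ℓ (t ^ 2)) :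
    IsAxis ℓ t (ℓ t) := by
  refine ⟨h.expanding_add ht, fun n => le_add_right ?_⟩
  induction n with
  | zero => exact Nat.zero_le _
  | succ n ih =>
    have := h.expanding_succ ht n
    omega

end IsHyperbolicLength

namespace IsAxis

variable {z : G} {D : ℕ}

theorem conj (h : IsLength ℓ) (hz : IsAxis ℓ z D) (x : G) :
    IsAxis ℓ (x * z * x⁻¹) (D + 6 * ℓ x) := by
  have hx := h.inv x
  have upper (n : ℕ) : ℓ ((x * z * x⁻¹) ^ n) ≤ ℓ (z ^ n) + 2 * ℓ x := by
    have h1 := h.mul (x * z ^ n) x⁻¹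
    have h2 := h.mul x (z ^ n)
    rw [conj_pow]
    omega
  have lower (n : ℕ) : ℓ (z ^ n) ≤ ℓ ((x * z * x⁻¹) ^ n) + 2 * ℓ x := by
    have h1 := h.le_mul_right (x * z ^ n) x⁻¹
    have h2 := h.le_mul_left x (z ^ n)
    rw [conj_pow]
    omega
  refine ⟨fun m n => ?_, fun n => ?_⟩
  · have := hz.add m n
    have := upper m
    have := upper n
    have := lower (m + n)
    omega
  · have := hz.le n
    have := lower n
    omega

theorem inv (h : IsLength ℓ) (hz : IsAxis ℓ z D) : IsAxis ℓ z⁻¹ D :=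
  ⟨fun m n => by simpa only [inv_pow, h.inv] using hz.add m n,
    fun n => by simpa only [inv_pow, h.inv] using hz.le n⟩

theorem natAbs_le (h : IsLength ℓ) (hz : IsAxis ℓ z D) (n : ℤ) : n.natAbs ≤ ℓ (z ^ n) + D := by
  rw [h.zpow_natAbs]
  exact hz.le _

theorem pow_ne_one (h : IsLength ℓ) (hz : IsAxis ℓ z D) {n : ℕ} (hn : n ≠ 0) : z ^ n ≠ 1 := by
  intro h1
  have h2 := hz.le (n * (D + 1))
  rw [pow_mul, h1, one_pow, h.one] at h2
  have : 1 * (D + 1) ≤ n * (D + 1) := Nat.mul_le_mul_right _ (Nat.one_le_iff_ne_zero.2 hn)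
  omega

/-- Replaces the generator of `⟨z⟩` by its inverse to make an exponent nonnegative. -/
theorem exists_zpow_eq_pow (h : IsLength ℓ) (hz : IsAxis ℓ z D) (n : ℤ) :
    ∃ t, IsAxis ℓ t D ∧ ℓ t = ℓ z ∧ Subgroup.zpowers t = Subgroup.zpowers z ∧
      z ^ n = t ^ n.natAbs := by
  obtain ⟨m, rfl | rfl⟩ := n.eq_nat_or_neg
  · exact ⟨z, hz, rfl, rfl, by simp⟩
  · exact ⟨z⁻¹, hz.inv h, h.inv z, Subgroup.zpowers_inv, by simp⟩

end IsAxis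

theorem IsHyperbolicLength.exists_isAxis_pow (h : IsHyperbolicLength ℓ δ) {g : G}
    (hg : ¬IsOfFinOrder g) : ∃ k D : ℕ, IsAxis ℓ (g ^ k) D := by
  obtain ⟨x, k, hlt⟩ := h.exists_expanding_pow hg (4 * δ)
  rw [mul_comm 2 k, pow_mul] at hlt
  have hconj : g ^ k = x * (x⁻¹ * g * x) ^ k * x⁻¹ := by
    rw [← conj_pow]
    group
  exact ⟨k, _, hconj ▸ (h.isAxis_of_expanding hlt).conj h.toIsLength x⟩

end Length

section Axis

variable {G : Type u} [Group G] {ℓ : G → ℕ} {δ : ℕ}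

namespace IsCosetMin

variable {C Z : Subgroup G} {g z : G} {D : ℕ}

theorem exists_eq_mul (ℓ : G → ℕ) (C : Subgroup G) (g : G) :
    ∃ c ∈ C, ∃ g', IsCosetMin ℓ C g' ∧ g = c * g' := by
  let F : ↥C → ℕ := fun c => ℓ (c * g)
  let m : ↥C := Function.argmin F
  refine ⟨(m : G)⁻¹, inv_mem m.2, m * g, fun c hc => ?_, (inv_mul_cancel_left _ _).symm⟩
  simpa only [F, m, Subgroup.coe_mul, ← mul_assoc] using Function.argmin_le F (⟨c, hc⟩ * m)

theorem mono (hg : IsCosetMin ℓ C g) (hZC : Z ≤ C) : IsCosetMin ℓ Z g :=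
  fun c hc => hg c (hZC hc)

/-- The comparison is made at a point of the axis so far away from `1` that the geodesic from it
to `z ^ k` cannot be shortened through `g`. -/
theorem pow_add_le (h : IsHyperbolicLength ℓ δ) (hz : IsAxis ℓ z D)
    (hg : IsCosetMin ℓ (Subgroup.zpowers z) g) (k : ℕ) :
    ℓ (z ^ k) + ℓ g ≤ ℓ ((z ^ k)⁻¹ * g) + ((2 * D + 2 * δ + 1) * ℓ z + 2 * δ) := by
  have hmin (m : ℕ) : ℓ g ≤ ℓ ((z ^ m)⁻¹ * g) :=
    hg _ (inv_mem (pow_mem (Subgroup.mem_zpowers z) m))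
  have hk := hmin k
  rcases le_total k (2 * D + 2 * δ + 1) with hkn | hkn
  · have := h.pow_le_of_le z hkn
    omega
  generalize hn : 2 * D + 2 * δ + 1 = n at hkn ⊢
  obtain ⟨q, rfl⟩ := Nat.exists_eq_add_of_le hkn
  have f := h.four g (z ^ (n + q)) (z ^ n) 1
  have hq : ℓ ((z ^ (n + q))⁻¹ * z ^ n) = ℓ (z ^ q) := by
    rw [h.mul_inv_comm, pow_add z n q, inv_mul_cancel_left]
  rw [hq, h.mul_inv_comm g, h.mul_inv_comm g (z ^ (n + q))] at f
  simp only [mul_one, h.inv] at f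
  have hgn := hmin n
  have hadd := hz.add n q
  have hle := hz.le n
  have hpow := h.pow_le z n
  omega

theorem add_le_of_mem_zpowers (h : IsHyperbolicLength ℓ δ) (hz : IsAxis ℓ z D)
    (hg : IsCosetMin ℓ (Subgroup.zpowers z) g) {c : G} (hc : c ∈ Subgroup.zpowers z) :
    ℓ c + ℓ g ≤ ℓ (c⁻¹ * g) + ((2 * D + 2 * δ + 1) * ℓ z + 2 * δ) := by
  obtain ⟨n, rfl⟩ := hc
  obtain ⟨t, ht, hlen, hzp, hn⟩ := hz.exists_zpow_eq_pow h.toIsLength n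
  rw [← hzp] at hg
  simpa only [hn, hlen] using hg.pow_add_le h ht n.natAbs

/-- If `⟨y⟩` and `⟨z⟩` are asymptotic up to translation by `x`, then all points of `z ^ s x ⟨y⟩` are
equally far from `⟨z⟩`. -/
theorem le_of_semiconjBy (h : IsLength ℓ) {y x a : G} {s i e f : ℤ}
    (ha : IsCosetMin ℓ (Subgroup.zpowers z) a) (hx : SemiconjBy x (y ^ e) (z ^ f)) (he : e ≠ 0)
    (hax : a * y ^ i = z ^ s * x) : ℓ a ≤ ℓ x + e.natAbs * ℓ y := by
  have hq : z ^ (f * (i / e)) * x = x * y ^ (e * (i / e)) := by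
    rw [zpow_mul, zpow_mul]
    exact (hx.zpow_right (i / e)).symm
  have hshift : z ^ (f * (i / e) - s) * a = x * y ^ (-(i % e)) :=
    calc z ^ (f * (i / e) - s) * a = z ^ (f * (i / e)) * (z ^ (-s) * (z ^ s * x) * y ^ (-i)) := by
          rw [← hax]
          group
      _ = z ^ (f * (i / e)) * x * y ^ (-i) := by group
      _ = x * y ^ (e * (i / e) - i) := by rw [hq, mul_assoc, ← zpow_add, ← sub_eq_add_neg]
      _ = x * y ^ (-(i % e)) := by rw [Int.emod_def, neg_sub]
  have hmod : (-(i % e)).natAbs ≤ e.natAbs := by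
    have h0 := Int.emod_nonneg i he
    have h1 := Int.emod_lt i he
    omega
  calc ℓ a ≤ ℓ (x * y ^ (-(i % e))) := hshift ▸ ha _ (zpow_mem (Subgroup.mem_zpowers z) _)
    _ ≤ ℓ x + ℓ (y ^ (-(i % e))) := h.mul _ _
    _ ≤ ℓ x + e.natAbs * ℓ y :=
      Nat.add_le_add_left ((h.zpow_le y _).trans (Nat.mul_le_mul_right _ hmod)) _

end IsCosetMin

theorem exists_le_and_eq_or_lt_add {u : ℕ → ℕ} {r L : ℕ} (h0 : u 0 ≤ r)
    (hu : ∀ i, u (i + 1) ≤ u i + L) (n : ℕ) : ∃ i ≤ n, u i ≤ r ∧ (i = n ∨ r < u i + L) := by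
  induction n with
  | zero => exact ⟨0, le_rfl, h0, Or.inl rfl⟩
  | succ n ih =>
    obtain ⟨i, hin, hir, rfl | hlt⟩ := ih
    · rcases le_or_gt (u (i + 1)) r with hle | hlt
      · exact ⟨i + 1, le_rfl, hle, Or.inl rfl⟩
      · exact ⟨i, Nat.le_succ i, hir, Or.inr (hlt.trans_le (hu i))⟩
    · exact ⟨i, hin.trans (Nat.le_succ n), hir, Or.inr hlt⟩

namespace IsAxis

variable {z y : G} {D E : ℕ}

theorem isContracting (h : IsHyperbolicLength ℓ δ) (hz : IsAxis ℓ z D) :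
    IsContracting ℓ (Subgroup.zpowers z) := by
  refine ⟨2 * ((2 * D + 2 * δ + 1) * ℓ z + 2 * δ) + 2 * δ, fun g g' hg hg' c hc => ?_⟩
  have f := h.four g (c * g') c 1
  rw [h.mul_inv_comm g c, h.mul_inv_comm (c * g') c, inv_mul_cancel_left] at f
  simp only [mul_one, h.inv] at f
  have hgc := hg.add_le_of_mem_zpowers h hz hc
  have hgc' := hg'.add_le_of_mem_zpowers h hz (inv_mem hc)
  rw [h.inv, inv_inv] at hgc'
  omega

/-- If a translate `a • ⟨y⟩` of one axis has endpoints projecting far apart on another axis, every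
point of the latter between the two projections is near the translate. -/
theorem exists_near (h : IsHyperbolicLength ℓ δ) (hz : IsAxis ℓ z D) (hy : IsAxis ℓ y D)
    {a b : G} {n j : ℕ} (hab : a * y ^ n = z ^ j * b)
    (hfar : ℓ a + ℓ (z ^ j) + ℓ b ≤ ℓ (y ^ n) + E) {s : ℕ} (hs : s ≤ j) :
    ∃ i : ℕ, ℓ ((z ^ s)⁻¹ * (a * y ^ i)) ≤ E + 2 * D + 2 * δ + ℓ y := by
  obtain ⟨i, hin, hir, hri⟩ := exists_le_and_eq_or_lt_add (u := fun i => ℓ (y ^ i))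
    (r := ℓ ((z ^ s)⁻¹ * a)) (L := ℓ y) (by simp [h.one])
    (fun i => pow_succ y i ▸ h.mul (y ^ i) y) n
  refine ⟨i, ?_⟩
  obtain ⟨q, rfl⟩ := Nat.exists_eq_add_of_le hs
  obtain ⟨p, rfl⟩ := Nat.exists_eq_add_of_le hin
  have hb : ℓ ((z ^ s)⁻¹ * (a * y ^ (i + p))) ≤ ℓ (z ^ q) + ℓ b := by
    rw [hab, pow_add, mul_assoc, inv_mul_cancel_left]
    exact h.mul _ _
  have f := h.four (z ^ s) (a * y ^ (i + p)) (a * y ^ i) a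
  have hp : ℓ ((a * y ^ (i + p))⁻¹ * (a * y ^ i)) = ℓ (y ^ p) := by
    rw [h.mul_inv_comm, pow_add, ← mul_assoc a, inv_mul_cancel_left]
  rw [h.mul_inv_comm _ a, inv_mul_cancel_left, h.mul_inv_comm _ a, inv_mul_cancel_left, hp] at f
  have hzadd := hz.add s q
  have hyadd := hy.add i p
  have hr := h.mul (z ^ s)⁻¹ a
  rw [h.inv] at hr
  rcases hri with hi | hri
  · rw [← hi] at f hb hfar hyadd
    omega
  · omega

/-- The points `z ^ s` and `z ^ s'` have equal differences `x` to points of `a ⟨y⟩`. So `x`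
conjugates a power of `y` to a power of `z`, and `a ⟨y⟩` stays parallel to `⟨z⟩`. -/
theorem length_le_of_eq_mul (h : IsLength ℓ) (hz : IsAxis ℓ z D) (hy : IsAxis ℓ y D) {a x : G}
    (ha : IsCosetMin ℓ (Subgroup.zpowers z) a) {s s' i i' : ℕ} (hss' : s < s')
    (hx : a * y ^ i = z ^ s * x) (hx' : a * y ^ i' = z ^ s' * x) :
    ℓ a ≤ ℓ x + (2 * ℓ x + s' * ℓ z + D) * ℓ y := by
  obtain ⟨f, rfl⟩ := Nat.exists_eq_add_of_le hss'.le
  have hf : f ≠ 0 := by omega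
  have hsemi : SemiconjBy x (y ^ ((i' : ℤ) - i)) (z ^ (f : ℤ)) :=
    calc x * y ^ ((i' : ℤ) - i) = (z ^ s)⁻¹ * (z ^ s * x) * (y ^ i)⁻¹ * y ^ i' := by
          rw [zpow_sub, zpow_natCast, zpow_natCast, ← zpow_natCast, ← zpow_natCast]
          group
      _ = (z ^ s)⁻¹ * (a * y ^ i') := by
          rw [← hx]
          group
      _ = z ^ (f : ℤ) * x := by rw [hx', pow_add, mul_assoc, inv_mul_cancel_left, zpow_natCast]
  have he : (i' : ℤ) - i ≠ 0 := by
    intro he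
    rw [he, zpow_zero, zpow_natCast, SemiconjBy, mul_one, right_eq_mul] at hsemi
    exact hz.pow_ne_one h hf hsemi
  have hle := ha.le_of_semiconjBy h (i := i) (s := s) hsemi he
    (by simpa only [zpow_natCast] using hx)
  refine hle.trans (Nat.add_le_add_left (Nat.mul_le_mul_right _ ?_) _)
  have h1 := hy.natAbs_le h ((i' : ℤ) - i)
  have h2 := h.le_mul_left x (y ^ ((i' : ℤ) - i))
  have h3 := h.mul (z ^ f) x
  have h4 : ℓ (z ^ f) ≤ (s + f) * ℓ z := h.pow_le_of_le z (Nat.le_add_left f s)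
  rw [hsemi.eq, zpow_natCast] at h2
  omega

theorem length_pow_le_or_length_le (h : IsHyperbolicLength ℓ δ) (D E L : ℕ) :
    ∃ K : ℕ, ∀ ⦃z y⦄, IsAxis ℓ z D → IsAxis ℓ y D → ℓ z ≤ L → ℓ y ≤ L → ∀ ⦃a b⦄ ⦃n j : ℕ⦄,
      IsCosetMin ℓ (Subgroup.zpowers z) a → a * y ^ n = z ^ j * b →
      ℓ a + ℓ (z ^ j) + ℓ b ≤ ℓ (y ^ n) + E → ℓ (z ^ j) ≤ K ∨ ℓ a ≤ K := by
  let M := E + 2 * D + 2 * δ + L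
  let N := (h.ball M).toFinset.card
  refine ⟨max (N * L) (M + (2 * M + N * L + D) * L),
    fun z y hz hy hzL hyL a b n j ha hab hfar => ?_⟩
  rw [le_max_iff, le_max_iff]
  rcases le_or_gt j N with hj | hj
  · exact Or.inl (Or.inl ((h.pow_le_of_le z hj).trans (Nat.mul_le_mul_left N hzL)))
  refine Or.inr (Or.inr ?_)
  have hnear : ∀ s ≤ N, ∃ x, ℓ x ≤ M ∧ ∃ i : ℕ, a * y ^ i = z ^ s * x := by
    intro s hs
    obtain ⟨i, hi⟩ := hz.exists_near h hy hab hfar (hs.trans hj.le)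
    exact ⟨_, hi.trans (Nat.add_le_add_left hyL _), i, (mul_inv_cancel_left _ _).symm⟩
  choose! x hxM i hxi using hnear
  have hmaps : Set.MapsTo x (Finset.range (N + 1)) (h.ball M).toFinset := by
    intro s hs
    simpa using hxM s (Nat.le_of_lt_succ (by simpa using hs))
  obtain ⟨s, hs, s', hs', hne, heq⟩ :=
    Finset.exists_ne_map_eq_of_card_lt_of_maps_to (by simp [N]) hmaps
  wlog hlt : s < s' generalizing s s'
  · exact this s' hs' s hs hne.symm heq.symm (by omega)
  have hsN : s' ≤ N := Nat.le_of_lt_succ (Finset.mem_range.1 hs')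
  have hx' := hxi s' hsN
  rw [← heq] at hx'
  refine (hz.length_le_of_eq_mul h.toIsLength hy ha hlt (hxi s (hlt.le.trans hsN)) hx').trans ?_
  have hxs := hxM s (hlt.le.trans hsN)
  gcongr

theorem hasSeparatedCosets (h : IsHyperbolicLength ℓ δ) (hz : IsAxis ℓ z D) :
    HasSeparatedCosets ℓ (Subgroup.zpowers z) := by
  obtain ⟨E, hE⟩ := hz.isContracting h
  obtain ⟨K, hK⟩ := length_pow_le_or_length_le h D E (ℓ z)
  refine ⟨max E K, fun a b ha hb c hc c' hc' hab => ?_⟩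
  rcases hE ha hb c' hc' with hle | hfar
  · exact Or.inl (hle.trans (le_max_left E K))
  rw [← hab, inv_mul_cancel_left] at hfar
  obtain ⟨n, rfl⟩ := hc
  obtain ⟨j, rfl⟩ := hc'
  obtain ⟨y, hy, hyl, -, hn⟩ := hz.exists_zpow_eq_pow h.toIsLength n
  obtain ⟨t, ht, htl, htz, hj⟩ := hz.exists_zpow_eq_pow h.toIsLength j
  simp only [hn, hj] at hab hfar ⊢
  rw [← htz] at ha
  exact (hK ht hy htl.le hyl.le ha hab hfar).imp (·.trans (le_max_right E K))
    (·.trans (le_max_right E K))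

end IsAxis

end Axis

section Contracting

variable {G : Type u} [Group G] {ℓ : G → ℕ} {C Z : Subgroup G} {B : ℕ}

theorem IsLength.isCosetMin_one (h : IsLength ℓ) (C : Subgroup G) : IsCosetMin ℓ C 1 :=
  fun _ _ => h.one.trans_le (Nat.zero_le _)

theorem isContracting_of_bounded (hC : ∀ c ∈ C, ℓ c ≤ B) : IsContracting ℓ C :=
  ⟨B, fun _ _ _ _ c hc => Or.inl (hC c hc)⟩

theorem hasSeparatedCosets_of_bounded (hC : ∀ c ∈ C, ℓ c ≤ B) : HasSeparatedCosets ℓ C :=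
  ⟨B, fun _ _ _ _ _ _ c' hc' _ => Or.inl (hC c' hc')⟩

namespace IsContracting

theorem exists_add_le (h : IsLength ℓ) (hC : IsContracting ℓ C) :
    ∃ E : ℕ, ∀ ⦃g⦄, IsCosetMin ℓ C g → ∀ c ∈ C, ℓ c + ℓ g ≤ ℓ (c * g) + E := by
  obtain ⟨E, hE⟩ := hC
  refine ⟨E, fun g hg c hc => ?_⟩
  have hmin := hg c hc
  have hcontr := hE (h.isCosetMin_one C) hg c hc
  rw [h.one, inv_one, one_mul] at hcontr
  omega

theorem exists_eq_mul_of_le (h : IsLength ℓ) (hC : IsContracting ℓ C) :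
    ∃ E : ℕ, ∀ ⦃B g⦄, (∀ c ∈ C, ℓ g ≤ ℓ (c * g) + B) →
      ∃ m ∈ C, ∃ g', IsCosetMin ℓ C g' ∧ g = m * g' ∧ ℓ m ≤ E + B := by
  obtain ⟨E, hE⟩ := hC.exists_add_le h
  refine ⟨E, fun B g hg => ?_⟩
  obtain ⟨m, hm, g', hg', rfl⟩ := IsCosetMin.exists_eq_mul ℓ C g
  refine ⟨m, hm, g', hg', rfl, ?_⟩
  have h1 := hE hg' m hm
  have h2 := hg m⁻¹ (inv_mem hm)
  rw [inv_mul_cancel_left] at h2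
  omega

theorem exists_projection_le (hC : IsContracting ℓ C) :
    ∃ E : ℕ, ∀ ⦃a a'⦄, IsCosetMin ℓ C a → IsCosetMin ℓ C a' → ∀ c ∈ C, ∀ c' ∈ C,
      ℓ ((c * a)⁻¹ * (c' * a')) ≤ ℓ a → ℓ (c⁻¹ * c') ≤ E := by
  obtain ⟨E, hE⟩ := hC
  refine ⟨E, fun a a' ha ha' c hc c' hc' hle => ?_⟩
  have hcontr := hE ha ha' _ (mul_mem (inv_mem hc) hc')
  have heq : a⁻¹ * (c⁻¹ * c' * a') = (c * a)⁻¹ * (c' * a') := by group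
  rw [heq] at hcontr
  omega

theorem of_le_of_near (h : IsLength ℓ) (hZ : IsContracting ℓ Z) (hZC : Z ≤ C)
    (hCZ : ∀ c ∈ C, ∃ z ∈ Z, ℓ (z⁻¹ * c) ≤ B) : IsContracting ℓ C := by
  obtain ⟨E₁, hE₁⟩ := hZ.exists_eq_mul_of_le h
  obtain ⟨E, hE⟩ := hZ
  refine ⟨E + 2 * E₁ + 5 * B, fun g g' hg hg' c hc => ?_⟩
  obtain ⟨z, hz, hf⟩ := hCZ c hc
  have hle := h.le_mul_left (z⁻¹ * c) g'
  have hnear : ∀ w ∈ Z, ℓ (z⁻¹ * c * g') ≤ ℓ (w * (z⁻¹ * c * g')) + B := by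
    intro w hw
    have hmul := h.mul (z⁻¹ * c) g'
    have hmin := hg' (w * (z⁻¹ * c)) (mul_mem (hZC hw) (mul_mem (inv_mem (hZC hz)) hc))
    rw [mul_assoc w] at hmin
    omega
  obtain ⟨m, hm, g'', hg'', hmg, hml⟩ := hE₁ hnear
  have hcg : c * g' = z * m * g'' := by rw [mul_assoc z, ← hmg]; group
  have hcontr := hE (hg.mono hZC) hg'' (z * m) (mul_mem hz hm)
  rw [← hcg] at hcontr
  have h1 := h.le_mul_right (z * m) (m⁻¹ * (z⁻¹ * c))
  have h2 := h.mul (z * m) (m⁻¹ * (z⁻¹ * c))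
  have h3 := h.mul m⁻¹ (z⁻¹ * c)
  have h4 := h.mul m g''
  have h5 : z * m * (m⁻¹ * (z⁻¹ * c)) = c := by group
  rw [h5] at h1 h2
  rw [h.inv] at h3
  rw [hmg] at hle
  omega

end IsContracting

theorem HasSeparatedCosets.of_le_of_near (h : IsLength ℓ) (hZ' : IsContracting ℓ Z)
    (hZ : HasSeparatedCosets ℓ Z) (hZC : Z ≤ C) (hCZ : ∀ c ∈ C, ∃ z ∈ Z, ℓ (z⁻¹ * c) ≤ B) :
    HasSeparatedCosets ℓ C := by
  obtain ⟨E, hE⟩ := hZ'.exists_eq_mul_of_le h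
  obtain ⟨K, hK⟩ := hZ
  refine ⟨K + E + 4 * B, fun a b ha hb c hc c' hc' hab => ?_⟩
  obtain ⟨z, hz, hf⟩ := hCZ c hc
  obtain ⟨z', hz', hf'⟩ := hCZ c' hc'
  rw [← h.inv (z⁻¹ * c)] at hf
  have hnear : ∀ w ∈ Z, ℓ (z'⁻¹ * c' * b * (z⁻¹ * c)⁻¹) ≤
      ℓ (w * (z'⁻¹ * c' * b * (z⁻¹ * c)⁻¹)) + 3 * B := by
    intro w hw
    have h1 := h.mul (z'⁻¹ * c' * b) (z⁻¹ * c)⁻¹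
    have h2 := h.mul (z'⁻¹ * c') b
    have hmin := hb (w * (z'⁻¹ * c')) (mul_mem (hZC hw) (mul_mem (inv_mem (hZC hz')) hc'))
    have h3 := h.le_mul_right (w * (z'⁻¹ * c') * b) (z⁻¹ * c)⁻¹
    simp only [mul_assoc] at h1 h2 h3 hmin ⊢
    omega
  obtain ⟨m, hm, b', hb', hmb, hml⟩ := hE hnear
  have haz : a * z = z' * m * b' :=
    calc a * z = a * c * (c⁻¹ * z) := by group
      _ = z' * (z'⁻¹ * c' * b * (z⁻¹ * c)⁻¹) := by rw [hab]; group
      _ = z' * m * b' := by rw [hmb, mul_assoc]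
  have hc'le : ℓ c' ≤ ℓ (z' * m) + (ℓ m + ℓ (z'⁻¹ * c')) := by
    have h1 := h.mul (z' * m) (m⁻¹ * (z'⁻¹ * c'))
    have h2 := h.mul m⁻¹ (z'⁻¹ * c')
    have h3 : z' * m * (m⁻¹ * (z'⁻¹ * c')) = c' := by group
    rw [h3] at h1
    rw [h.inv] at h2
    omega
  have hsep := hK (ha.mono hZC) hb' z hz (z' * m) (mul_mem hz' hm) haz
  omega

theorem mul_le_of_eventually_add_le {f : ℕ → ℕ} {B E S L t₀ T : ℕ} (hS : 0 < S) (hBE : B * E ≤ S)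
    (hL : ∀ t ≤ T, f t ≤ L * t) (hE : ∀ t, t₀ ≤ t → t + S ≤ T → f (t + S) ≤ f t + E) :
    ∀ t ≤ T, B * f t ≤ B * (L * (t₀ + S)) + t := by
  intro t
  induction t using Nat.strong_induction_on with
  | _ t ih =>
    intro htT
    rcases lt_or_ge t (t₀ + S) with ht | ht
    · refine le_add_right (Nat.mul_le_mul_left B ((hL t htT).trans ?_))
      exact Nat.mul_le_mul_left L ht.le
    · obtain ⟨r, rfl⟩ := Nat.exists_eq_add_of_le' (Nat.le_of_add_left_le ht)
      calc B * f (r + S) ≤ B * (f r + E) := Nat.mul_le_mul_left B (hE r (by omega) htT)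
        _ = B * f r + B * E := mul_add _ _ _
        _ ≤ B * (L * (t₀ + S)) + r + S := add_le_add (ih r (by omega) (by omega)) hBE
        _ = B * (L * (t₀ + S)) + (r + S) := add_assoc _ _ _

/-- A Lipschitz path moving away from `C` at a linear rate has sublinearly moving projection: once
it is far from `C`, every `S` steps move the projection by at most a constant. -/
theorem IsContracting.exists_path_projection_le (h : IsLength ℓ) (hC : IsContracting ℓ C)
    (Λ lam B : ℕ) :
    ∃ K : ℕ, ∀ (T : ℕ) (p : ℕ → G), p 0 = 1 →
      (∀ t s, t + s ≤ T → ℓ ((p t)⁻¹ * p (t + s)) ≤ Λ * s) →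
      (∀ t ≤ T, ∀ c ∈ C, t ≤ lam * ℓ (c * p t)) →
      ∃ c ∈ C, ∃ a, IsCosetMin ℓ C a ∧ p T = c * a ∧ B * ℓ c ≤ K + T := by
  obtain ⟨E, hE⟩ := hC.exists_projection_le
  let S := B * E + 1
  refine ⟨B * (2 * Λ * (lam * (Λ * S) + 1 + S)), fun T p h0 hlip haway => ?_⟩
  choose c hc a ha hca using fun t => IsCosetMin.exists_eq_mul ℓ C (p t)
  refine ⟨c T, hc T, a T, ha T, hca T, mul_le_of_eventually_add_le (f := fun t => ℓ (c t))
    (Nat.succ_pos (B * E)) (Nat.le_succ (B * E)) (fun t ht => ?_) (fun t ht htS => ?_) T le_rfl⟩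
  · have h1 := hlip 0 t (by omega)
    rw [h0, inv_one, one_mul, zero_add, hca t] at h1
    have h2 := h.le_mul_right (c t) (a t)
    have h3 := ha t _ (hc t)
    rw [mul_assoc]
    omega
  · have haway_t : t ≤ lam * ℓ (a t) := by
      simpa only [hca t, inv_mul_cancel_left] using haway t (by omega) _ (inv_mem (hc t))
    have hfar : Λ * S ≤ ℓ (a t) := by
      by_contra! hlt
      have := Nat.mul_le_mul_left lam hlt.le
      omega
    have hstep := (hlip t S htS).trans hfar
    rw [hca t, hca (t + S)] at hstep
    have hproj := hE (ha t) (ha (t + S)) _ (hc t) _ (hc (t + S)) hstep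
    have hmul := h.mul (c t) ((c t)⁻¹ * c (t + S))
    rw [mul_inv_cancel_left] at hmul
    exact hmul.trans (Nat.add_le_add_left hproj _)

end Contracting

namespace IsWordOver

variable {G : Type u} {X Y : Set G} {l l₁ l₂ : List G}

theorem append (h₁ : IsWordOver X l₁) (h₂ : IsWordOver X l₂) : IsWordOver X (l₁ ++ l₂) :=
  fun x hx => (List.mem_append.1 hx).elim (h₁ x) (h₂ x)

theorem of_subset (h : IsWordOver X l₁) (hsub : l₂ ⊆ l₁) : IsWordOver X l₂ :=
  fun x hx => h x (hsub hx)

theorem mono (h : IsWordOver X l) (hXY : X ⊆ Y) : IsWordOver Y l :=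
  fun x hx => hXY (h x hx)

end IsWordOver

section Words

variable {G : Type u} [Group G] {X Y : Set G} {H K : Subgroup G} {ℓ : G → ℕ}

/-- `X` is closed under inversion and generates the subgroup `H`; unlike in `IsSymmGen`, finiteness
is a separate hypothesis. -/
structure SymmGenerates (X : Set G) (H : Subgroup G) : Prop where
  inv_mem : ∀ x ∈ X, x⁻¹ ∈ X
  closure_eq : Subgroup.closure X = H

theorem IsSymmGen.symmGenerates (hX : IsSymmGen X) : SymmGenerates X (⊤ : Subgroup G) :=
  ⟨hX.2.1, hX.2.2⟩

namespace IsWordOver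

variable {l : List G}

theorem wordLength_prod_le (h : IsWordOver X l) : wordLength X l.prod ≤ l.length :=
  Nat.sInf_le ⟨l, rfl, h, rfl⟩

theorem exists_isGeodesicWord (h : IsWordOver X l) :
    ∃ l', IsGeodesicWord X l' ∧ l'.prod = l.prod := by
  have hne : {n | ∃ l' : List G, l'.length = n ∧ (∀ x ∈ l', x ∈ X) ∧ l'.prod = l.prod}.Nonempty :=
    ⟨l.length, l, rfl, h, rfl⟩
  obtain ⟨l', hlen, hl', hprod⟩ := Nat.sInf_mem hne
  exact ⟨l', ⟨hl', by rw [hprod]; exact hlen⟩, hprod⟩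

end IsWordOver

theorem isGeodesicWord_nil : IsGeodesicWord X ([] : List G) :=
  have hnil : IsWordOver X ([] : List G) := fun _ hx => absurd hx List.not_mem_nil
  ⟨hnil, (Nat.le_zero.1 hnil.wordLength_prod_le).symm⟩

theorem IsGeodesicWord.of_infix {u v : List G} (hu : IsGeodesicWord X u) (hv : v <:+: u) :
    IsGeodesicWord X v := by
  obtain ⟨p, q, rfl⟩ := hv
  have hp : IsWordOver X p := hu.1.of_subset (by simp)
  have hq : IsWordOver X q := hu.1.of_subset (by simp)
  have hv : IsWordOver X v := hu.1.of_subset fun x hx => by simp [hx]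
  obtain ⟨v', hv', hprod⟩ := hv.exists_isGeodesicWord
  refine ⟨hv, le_antisymm ?_ hv.wordLength_prod_le⟩
  have hle := ((hp.append hv'.1).append hq).wordLength_prod_le
  have hlen := hu.2
  have hlen' := hv'.2
  simp only [List.prod_append, List.length_append, hprod] at hle hlen hlen'
  omega

theorem wordLength_one (X : Set G) : wordLength X (1 : G) = 0 :=
  isGeodesicWord_nil.2.symm

theorem IsLength.prod_le (h : IsLength ℓ) {Λ : ℕ} {l : List G} (hl : ∀ x ∈ l, ℓ x ≤ Λ) :
    ℓ l.prod ≤ Λ * l.length := by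
  induction l with
  | nil => simp [h.one]
  | cons x l ih =>
    rw [List.forall_mem_cons] at hl
    rw [List.prod_cons, List.length_cons, Nat.mul_succ, add_comm]
    exact (h.mul x l.prod).trans (add_le_add hl.1 (ih hl.2))

namespace SymmGenerates

theorem mem (hX : SymmGenerates X H) {x : G} (hx : x ∈ X) : x ∈ H :=
  hX.closure_eq ▸ Subgroup.subset_closure hx

theorem prod_mem (hX : SymmGenerates X H) {l : List G} (hl : IsWordOver X l) : l.prod ∈ H :=
  Subgroup.list_prod_mem _ fun x hx => hX.mem (hl x hx)

theorem union (hX : SymmGenerates X H) (hY : SymmGenerates Y K) :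
    SymmGenerates (X ∪ Y) (H ⊔ K) where
  inv_mem x hx := hx.imp (hX.inv_mem x) (hY.inv_mem x)
  closure_eq := by rw [Subgroup.closure_union, hX.closure_eq, hY.closure_eq]

theorem exists_isGeodesicWord (hX : SymmGenerates X H) {g : G} (hg : g ∈ H) :
    ∃ l, IsGeodesicWord X l ∧ l.prod = g := by
  rw [← hX.closure_eq, ← Subgroup.mem_toSubmonoid, Subgroup.closure_toSubmonoid] at hg
  obtain ⟨l, hl, rfl⟩ := Submonoid.exists_list_of_mem_closure hg
  have hlX : IsWordOver X l :=
    fun x hx => (hl x hx).elim id fun hinv => inv_inv x ▸ hX.inv_mem _ hinv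
  exact hlX.exists_isGeodesicWord

theorem wordLength_anti (hX : SymmGenerates X H) (hXY : X ⊆ Y) {g : G} (hg : g ∈ H) :
    wordLength Y g ≤ wordLength X g := by
  obtain ⟨l, hl, rfl⟩ := hX.exists_isGeodesicWord hg
  exact hl.2 ▸ (hl.1.mono hXY).wordLength_prod_le

theorem eq_one_of_wordLength_eq_zero (hX : SymmGenerates X H) {g : G} (hg : g ∈ H)
    (h0 : wordLength X g = 0) : g = 1 := by
  obtain ⟨l, hl, rfl⟩ := hX.exists_isGeodesicWord hg
  rw [← hl.2, List.length_eq_zero_iff] at h0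
  rw [h0, List.prod_nil]

theorem wordLength_mul_le (hX : SymmGenerates X H) {g h : G} (hg : g ∈ H) (hh : h ∈ H) :
    wordLength X (g * h) ≤ wordLength X g + wordLength X h := by
  obtain ⟨l, hl, rfl⟩ := hX.exists_isGeodesicWord hg
  obtain ⟨m, hm, rfl⟩ := hX.exists_isGeodesicWord hh
  rw [← hl.2, ← hm.2, ← List.prod_append, ← List.length_append]
  exact (hl.1.append hm.1).wordLength_prod_le

theorem wordLength_inv_le (hX : SymmGenerates X H) {g : G} (hg : g ∈ H) :
    wordLength X g⁻¹ ≤ wordLength X g := by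
  obtain ⟨l, hl, rfl⟩ := hX.exists_isGeodesicWord hg
  have hinv : IsWordOver X (l.map fun x => x⁻¹).reverse := by
    intro x hx
    obtain ⟨y, hy, rfl⟩ := List.mem_map.1 (List.mem_reverse.1 hx)
    exact hX.inv_mem y (hl.1 y hy)
  rw [← hl.2, List.prod_inv_reverse]
  simpa using hinv.wordLength_prod_le

theorem wordLength_inv (hX : SymmGenerates X H) {g : G} (hg : g ∈ H) :
    wordLength X g⁻¹ = wordLength X g :=
  le_antisymm (hX.wordLength_inv_le hg) (by simpa using hX.wordLength_inv_le (H.inv_mem hg))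

theorem isLength_subtype (hX : SymmGenerates X H) (hKH : K ≤ H) :
    IsLength fun k : ↥K => wordLength X (k : G) where
  one := wordLength_one X
  inv k := hX.wordLength_inv (hKH k.2)
  mul k k' := hX.wordLength_mul_le (hKH k.2) (hKH k'.2)

theorem isLength (hX : SymmGenerates X ⊤) : IsLength (wordLength X) where
  one := wordLength_one X
  inv _ := hX.wordLength_inv (Subgroup.mem_top _)
  mul _ _ := hX.wordLength_mul_le (Subgroup.mem_top _) (Subgroup.mem_top _)

theorem exists_le_mul_wordLength (hX : SymmGenerates X H) (hfin : X.Finite) (h : IsLength ℓ) :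
    ∃ Λ : ℕ, ∀ g ∈ H, ℓ g ≤ Λ * wordLength X g := by
  obtain ⟨Λ, hΛ⟩ := (hfin.image ℓ).bddAbove
  refine ⟨Λ, fun g hg => ?_⟩
  obtain ⟨l, hl, rfl⟩ := hX.exists_isGeodesicWord hg
  rw [← hl.2]
  exact h.prod_le fun x hx => hΛ ⟨x, hl.1 x hx, rfl⟩

theorem finite_wordLength_le (hX : SymmGenerates X ⊤) (hfin : X.Finite) (n : ℕ) :
    {g | wordLength X g ≤ n}.Finite := by
  induction n with
  | zero =>
    exact (Set.finite_singleton (1 : G)).subset fun g hg =>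
      hX.eq_one_of_wordLength_eq_zero (Subgroup.mem_top g) (Nat.le_zero.1 hg)
  | succ n ih =>
    refine ((Set.finite_singleton (1 : G)).union (Set.Finite.image2 (· * ·) hfin ih)).subset ?_
    intro g hg
    obtain ⟨l, hl, rfl⟩ := hX.exists_isGeodesicWord (Subgroup.mem_top g)
    rcases l with _ | ⟨x, l⟩
    · exact Or.inl List.prod_nil
    have hxl : wordLength X l.prod + 1 ≤ n + 1 := by
      rw [← (hl.of_infix (List.suffix_cons x l).isInfix).2, ← List.length_cons, hl.2]
      exact hg
    exact Or.inr ⟨x, hl.1 x List.mem_cons_self, l.prod, Nat.le_of_succ_le_succ hxl,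
      List.prod_cons.symm⟩

end SymmGenerates

theorem four_point_of_gromovProd {δ : ℝ} {x y z w : G}
    (hδ : gromovProd X x z w ≥ min (gromovProd X x y w) (gromovProd X y z w) - δ) :
    wordLength X (x⁻¹ * z) + wordLength X (y⁻¹ * w) ≤
        wordLength X (x⁻¹ * y) + wordLength X (z⁻¹ * w) + 2 * ⌈δ⌉₊ ∨
      wordLength X (x⁻¹ * z) + wordLength X (y⁻¹ * w) ≤
        wordLength X (y⁻¹ * z) + wordLength X (x⁻¹ * w) + 2 * ⌈δ⌉₊ := by
  have hceil := Nat.le_ceil δ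
  rw [ge_iff_le, tsub_le_iff_right, min_le_iff] at hδ
  simp only [gromovProd, wordDist] at hδ
  rify
  refine hδ.imp (fun hle => ?_) (fun hle => ?_) <;> linarith

theorem IsWordHyperbolic.exists_isHyperbolicLength (hG : IsWordHyperbolic G) :
    ∃ X : Set G, IsSymmGen X ∧ ∃ δ : ℕ, IsHyperbolicLength (wordLength X) δ := by
  obtain ⟨X, hX, δ, -, hδ⟩ := hG
  have hlen := hX.symmGenerates.isLength
  refine ⟨X, hX, ⌈δ⌉₊, hlen, fun x y z w => four_point_of_gromovProd (hδ x y z w),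
    hX.symmGenerates.finite_wordLength_le hX.1, fun g r hr => ?_⟩
  obtain ⟨l, hl, rfl⟩ := hX.symmGenerates.exists_isGeodesicWord (Subgroup.mem_top g)
  have htake := hl.of_infix (List.take_prefix r l).isInfix
  have hdrop := hl.of_infix (List.drop_suffix r l).isInfix
  have hquot : (l.take r).prod⁻¹ * l.prod = (l.drop r).prod := by
    rw [inv_mul_eq_iff_eq_mul, List.prod_take_mul_prod_drop]
  have hlr := hl.2
  refine ⟨(l.take r).prod, ?_, ?_⟩
  · rw [← htake.2, List.length_take]
    omega
  · rw [hquot, ← hdrop.2, List.length_drop]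
    omega

end Words

section VirtuallyCyclic

theorem finiteIndex_zpowers_pow {C : Type*} [Group C] {z : C}
    (hz : (Subgroup.zpowers z).FiniteIndex) {k : ℕ} (hk : k ≠ 0) :
    (Subgroup.zpowers (z ^ k)).FiniteIndex := by
  let P : Subgroup (Multiplicative ℤ) := (powMonoidHom k).range
  have hP : P.FiniteIndex := Subgroup.finiteIndex_range_powMonoidHom_of_fg _ hk
  have hmap : P.map (zpowersHom C z) = Subgroup.zpowers (z ^ k) := by
    rw [MonoidHom.map_range]
    ext x
    simp [Subgroup.mem_zpowers_iff, zpow_mul]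
  have hmap_top : (⊤ : Subgroup (Multiplicative ℤ)).map (zpowersHom C z) = Subgroup.zpowers z :=
    (MonoidHom.range_eq_map _).symm
  have hle : Subgroup.zpowers (z ^ k) ≤ Subgroup.zpowers z :=
    Subgroup.zpowers_le.2 (pow_mem (Subgroup.mem_zpowers z) k)
  rw [Subgroup.finiteIndex_iff, ← Subgroup.relIndex_mul_index hle, ← hmap, ← hmap_top,
    Subgroup.relIndex_map_map, top_sup_eq, Subgroup.relIndex_top_right, hmap_top]
  exact mul_ne_zero (Subgroup.finiteIndex_of_le le_sup_left).index_ne_zero hz.index_ne_zero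

theorem exists_mem_inv_mul_le {C : Type*} [Group C] (Z : Subgroup C) [Z.FiniteIndex] (f : C → ℕ) :
    ∃ B : ℕ, ∀ c, ∃ z ∈ Z, f (z⁻¹ * c) ≤ B := by
  obtain ⟨R, hR, -⟩ := Z.exists_isComplement_right 1
  have hfin : R.Finite := hR.finite_right_iff.2 inferInstance
  obtain ⟨B, hB⟩ := (hfin.image f).bddAbove
  refine ⟨B, fun c => ?_⟩
  obtain ⟨⟨⟨z, hz⟩, r, hr⟩, rfl⟩ := (hR.existsUnique c).exists
  exact ⟨z, hz, hB ⟨r, hr, (congrArg f (inv_mul_cancel_left z r)).symm⟩⟩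

variable {G : Type u} [Group G] {ℓ : G → ℕ} {δ : ℕ} {C : Subgroup G}

namespace IsVirtuallyCyclic

theorem finite_or_exists_isAxis (hC : IsVirtuallyCyclic ↥C) (h : IsHyperbolicLength ℓ δ) :
    Finite ↥C ∨
      ∃ (z : ↥C) (D : ℕ), IsAxis ℓ (z : G) D ∧ (Subgroup.zpowers z).FiniteIndex := by
  obtain ⟨Z, hZ, hfin⟩ := hC
  obtain ⟨z, rfl⟩ := (Subgroup.isCyclic_iff_exists_zpowers_eq_top Z).1 hZ
  by_cases hz : IsOfFinOrder z
  · have : Finite (Subgroup.zpowers z) := finite_zpowers.2 hz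
    exact Or.inl ((Subgroup.finite_iff_finite_and_finiteIndex _).2 ⟨this, hfin⟩)
  obtain ⟨k, D, hax⟩ := h.exists_isAxis_pow (Submonoid.isOfFinOrder_coe.not.2 hz)
  have hk : k ≠ 0 := by
    rintro rfl
    exact hax.pow_ne_one h.toIsLength one_ne_zero (by simp)
  exact Or.inr ⟨z ^ k, D, hax, finiteIndex_zpowers_pow hfin hk⟩

theorem isContracting_and_hasSeparatedCosets (hC : IsVirtuallyCyclic ↥C)
    (h : IsHyperbolicLength ℓ δ) : IsContracting ℓ C ∧ HasSeparatedCosets ℓ C := by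
  rcases hC.finite_or_exists_isAxis h with hfin | ⟨z, D, hz, hindex⟩
  · obtain ⟨B, hB⟩ := ((Set.toFinite (C : Set G)).image ℓ).bddAbove
    have hbound : ∀ c ∈ C, ℓ c ≤ B := fun c hc => hB ⟨c, hc, rfl⟩
    exact ⟨isContracting_of_bounded hbound, hasSeparatedCosets_of_bounded hbound⟩
  obtain ⟨B, hB⟩ := exists_mem_inv_mul_le (Subgroup.zpowers z) fun c => ℓ c
  have hZC : Subgroup.zpowers (z : G) ≤ C := Subgroup.zpowers_le.2 z.2
  have hnear : ∀ c ∈ C, ∃ y ∈ Subgroup.zpowers (z : G), ℓ (y⁻¹ * c) ≤ B := by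
    intro c hc
    obtain ⟨_, ⟨n, rfl⟩, hle⟩ := hB ⟨c, hc⟩
    exact ⟨z ^ n, ⟨n, rfl⟩, hle⟩
  have hcontr := hz.isContracting h
  exact ⟨hcontr.of_le_of_near h.toIsLength hZC hnear,
    (hz.hasSeparatedCosets h).of_le_of_near h.toIsLength hcontr hZC hnear⟩

/-- Virtually cyclic subgroups are undistorted: a finite index subgroup is spanned by an axis. -/
theorem exists_le_mul (hC : IsVirtuallyCyclic ↥C) (h : IsHyperbolicLength ℓ δ)
    (hℓ : ∀ g, ℓ g = 0 → g = 1) {ℓ' : ↥C → ℕ} (h' : IsLength ℓ') :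
    ∃ lam : ℕ, ∀ c : ↥C, ℓ' c ≤ lam * ℓ c := by
  suffices ∃ lam : ℕ, ∀ c : ↥C, ℓ' c ≤ lam * (ℓ c + 1) by
    obtain ⟨lam, hlam⟩ := this
    refine ⟨2 * lam, fun c => ?_⟩
    rcases Nat.eq_zero_or_pos (ℓ c) with h0 | hpos
    · rw [OneMemClass.coe_eq_one.1 (hℓ c h0), h'.one]
      exact Nat.zero_le _
    · calc ℓ' c ≤ lam * (ℓ c + 1) := hlam c
        _ ≤ lam * (2 * ℓ c) := Nat.mul_le_mul_left lam (by omega)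
        _ = 2 * lam * ℓ c := by ring
  rcases hC.finite_or_exists_isAxis h with hfin | ⟨z, D, hz, hindex⟩
  · obtain ⟨B, hB⟩ := (Set.finite_range ℓ').bddAbove
    exact ⟨B, fun c => (hB ⟨c, rfl⟩).trans (Nat.le_mul_of_pos_right B (Nat.succ_pos _))⟩
  obtain ⟨B, hB⟩ := exists_mem_inv_mul_le (Subgroup.zpowers z) fun c => ℓ c + ℓ' c
  refine ⟨(B + D + 1) * (ℓ' z + B), fun c => ?_⟩
  obtain ⟨_, ⟨n, rfl⟩, hle⟩ := hB c
  obtain ⟨hf, hf'⟩ : ℓ ↑((z ^ n)⁻¹ * c) ≤ B ∧ ℓ' ((z ^ n)⁻¹ * c) ≤ B :=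
    ⟨Nat.le_of_add_right_le hle, Nat.le_of_add_left_le hle⟩
  have hn : n.natAbs + 1 ≤ ℓ c + (B + D + 1) := by
    have hax := hz.natAbs_le h.toIsLength n
    have hmul := h.mul (c : G) ((c : G)⁻¹ * z ^ n)
    rw [mul_inv_cancel_left, h.mul_inv_comm] at hmul
    rw [Subgroup.coe_mul, Subgroup.coe_inv, Subgroup.coe_zpow] at hf
    omega
  calc ℓ' c ≤ ℓ' (z ^ n) + ℓ' ((z ^ n)⁻¹ * c) := by
        simpa only [mul_inv_cancel_left] using h'.mul (z ^ n) ((z ^ n)⁻¹ * c)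
    _ ≤ n.natAbs * ℓ' z + B := add_le_add (h'.zpow_le z n) hf'
    _ ≤ (n.natAbs + 1) * (ℓ' z + B) := by
      rw [add_one_mul, mul_add]
      omega
    _ ≤ (ℓ c + (B + D + 1)) * (ℓ' z + B) := Nat.mul_le_mul_right _ hn
    _ ≤ (B + D + 1) * (ℓ' z + B) * (ℓ c + 1) := by
      rw [mul_right_comm]
      exact Nat.mul_le_mul_right _ (by nlinarith)

end IsVirtuallyCyclic

end VirtuallyCyclic

section Syllables

variable {G : Type u} [Group G] {X : Set G} {A C : Subgroup G} {ℓ : G → ℕ} {Λ lam K L : ℕ}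

/-- Replacing a syllable `a` that is shortest in `C a` by `c * a * c'⁻¹` costs a linearly bounded
amount, once the potential `B * ℓ` is paid for the element `c` carried in and refunded for the
element `c'` carried out. -/
def HasSyllableBound (ℓ : G → ℕ) (X : Set G) (A C : Subgroup G) (B K : ℕ) : Prop :=
  ∀ a ∈ A, IsCosetMin (wordLength X) C a → ∀ c ∈ C, ∀ c' ∈ C,
    B * ℓ c + wordLength X a ≤ K * ℓ (c * a * c'⁻¹) + K + B * ℓ c'

theorem HasSyllableBound.mono {B : ℕ} (h : HasSyllableBound ℓ X A C B K) (hKL : K ≤ L) :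
    HasSyllableBound ℓ X A C B L := by
  intro a ha hmin c hc c' hc'
  refine (h a ha hmin c hc c' hc').trans ?_
  gcongr

theorem shortestIn_coset_iff {a : G} :
    ShortestIn X a {x | ∃ c ∈ C, x = c * a} ↔ IsCosetMin (wordLength X) C a := by
  refine ⟨fun h c hc => h.2 _ ⟨c, hc, rfl⟩, fun h => ⟨⟨1, one_mem C, (one_mul a).symm⟩, ?_⟩⟩
  rintro _ ⟨c, hc, rfl⟩
  exact h c hc

theorem IsGeodesicWord.length_le_of_isCosetMin {l : List G} (hX : SymmGenerates X A) (hCA : C ≤ A)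
    (hl : IsGeodesicWord X l) (hmin : IsCosetMin (wordLength X) C l.prod) {t : ℕ}
    (ht : t ≤ l.length) {c : G} (hc : c ∈ C) : t ≤ wordLength X (c * (l.take t).prod) := by
  have htake := (hl.of_infix (List.take_prefix t l).isInfix).1
  have hdrop := (hl.of_infix (List.drop_suffix t l).isInfix).1
  have hle := hmin c hc
  have hmul := hX.wordLength_mul_le (mul_mem (hCA hc) (hX.prod_mem htake)) (hX.prod_mem hdrop)
  have hlen := hdrop.wordLength_prod_le
  rw [mul_assoc, List.prod_take_mul_prod_drop] at hmul
  rw [← hl.2] at hle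
  rw [List.length_drop] at hlen
  omega

theorem IsContracting.exists_coset_projection_le (hC : IsContracting ℓ C) (h : IsLength ℓ)
    (hX : SymmGenerates X A) (hCA : C ≤ A) (hΛ : ∀ a ∈ A, ℓ a ≤ Λ * wordLength X a)
    (hlam : ∀ a ∈ A, wordLength X a ≤ lam * ℓ a) (B : ℕ) :
    ∃ K : ℕ, ∀ a ∈ A, IsCosetMin (wordLength X) C a →
      ∃ d ∈ C, ∃ a', IsCosetMin ℓ C a' ∧ a = d * a' ∧ B * ℓ d ≤ K + wordLength X a := by
  obtain ⟨K, hK⟩ := hC.exists_path_projection_le h Λ lam B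
  refine ⟨K, fun a ha hmin => ?_⟩
  obtain ⟨l, hl, rfl⟩ := hX.exists_isGeodesicWord ha
  have hpath := hK l.length (fun t => (l.take t).prod) rfl (fun t s _ => ?_) (fun t ht c hc => ?_)
  · rwa [List.take_length, hl.2] at hpath
  · have hword := (hl.of_infix
      ((List.take_prefix s _).isInfix.trans (List.drop_suffix t l).isInfix)).1
    rw [List.take_add, List.prod_append, inv_mul_cancel_left]
    exact (hΛ _ (hX.prod_mem hword)).trans
      (Nat.mul_le_mul_left Λ (hword.wordLength_prod_le.trans (List.length_take_le _ _)))
  · have htake := (hl.of_infix (List.take_prefix t l).isInfix).1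
    exact (hl.length_le_of_isCosetMin hX hCA hmin ht hc).trans
      (hlam _ (mul_mem (hCA hc) (hX.prod_mem htake)))

theorem wordLength_le_mul_of_isCosetMin (h : IsLength ℓ) (hCA : C ≤ A)
    (hlam : ∀ a ∈ A, wordLength X a ≤ lam * ℓ a) {a c c' : G} (ha : a ∈ A)
    (hmin : IsCosetMin (wordLength X) C a) (hc : c ∈ C) :
    wordLength X a ≤ lam * (ℓ (c * a * c'⁻¹) + ℓ c') := by
  have hmul := h.mul (c * a * c'⁻¹) c'
  rw [inv_mul_cancel_right] at hmul
  exact ((hmin c hc).trans (hlam _ (mul_mem (hCA hc) ha))).trans (Nat.mul_le_mul_left lam hmul)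

theorem IsContracting.exists_hasSyllableBound (hC : IsContracting ℓ C)
    (hsep : HasSeparatedCosets ℓ C) (h : IsLength ℓ) (hX : SymmGenerates X A) (hCA : C ≤ A)
    (hΛ : ∀ a ∈ A, ℓ a ≤ Λ * wordLength X a) (hlam : ∀ a ∈ A, wordLength X a ≤ lam * ℓ a) :
    ∃ K : ℕ, HasSyllableBound ℓ X A C (2 * lam) K := by
  obtain ⟨K, hK⟩ := hsep
  obtain ⟨P, hP⟩ := hC.exists_coset_projection_le h hX hCA hΛ hlam (2 * lam)
  obtain ⟨Q, hQ, hQ'⟩ : ∃ Q, 2 * lam * K + P ≤ Q ∧ 2 * lam * (Λ * (lam * K)) + lam * K ≤ Q :=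
    ⟨_, Nat.le_add_right _ _, Nat.le_add_left _ _⟩
  refine ⟨6 * lam + Q, fun a ha hmin c hc c' hc' => ?_⟩
  suffices 2 * lam * ℓ c + wordLength X a ≤ 6 * lam * ℓ (c * a * c'⁻¹) + Q + 2 * lam * ℓ c' from
    this.trans (Nat.add_le_add_right (add_le_add (Nat.mul_le_mul_right _ (Nat.le_add_right _ _))
      (Nat.le_add_left _ _)) _)
  obtain ⟨d, hd, a', ha', rfl, hdP⟩ := hP a ha hmin
  obtain ⟨e, he, b, hb, heb⟩ := IsCosetMin.exists_eq_mul ℓ C (a' * c'⁻¹)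
  rcases hK ha' hb c'⁻¹ (inv_mem hc') e he heb with heK | haK
  · have hshift := wordLength_le_mul_of_isCosetMin h hCA hlam (c' := c') ha hmin hc
    have hw : c * (d * a') * c'⁻¹ = c * d * e * b := by
      rw [mul_assoc, mul_assoc d, heb]
      group
    rw [hw] at hshift ⊢
    have hbw := hb _ (mul_mem (mul_mem hc hd) he)
    have hcdeb := h.le_mul_right (c * d * e) b
    have hcde := h.le_mul_right (c * d) e
    have hcd := h.le_mul_right c d
    have hc_le : ℓ c ≤ 2 * ℓ (c * d * e * b) + K + ℓ d := by omega
    have hmul := Nat.mul_le_mul_left (2 * lam) hc_le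
    linarith
  · have hword : wordLength X (d * a') ≤ lam * K := by
      have hle := hmin d⁻¹ (inv_mem hd)
      have ha'A : d⁻¹ * (d * a') ∈ A := mul_mem (inv_mem (hCA hd)) ha
      rw [inv_mul_cancel_left] at hle ha'A
      exact (hle.trans (hlam a' ha'A)).trans (Nat.mul_le_mul_left lam haK)
    have hda : ℓ (d * a') ≤ Λ * (lam * K) := (hΛ _ ha).trans (Nat.mul_le_mul_left Λ hword)
    have hca := h.le_mul_right c (d * a')
    have hcac := h.le_mul_right (c * (d * a')) c'⁻¹
    rw [h.inv] at hcac
    have hc_le : ℓ c ≤ ℓ (c * (d * a') * c'⁻¹) + ℓ c' + Λ * (lam * K) := by omega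
    have hmul := Nat.mul_le_mul_left (2 * lam) hc_le
    have hnonneg := Nat.zero_le (4 * lam * ℓ (c * (d * a') * c'⁻¹))
    linarith

end Syllables

section Amalgam

variable {G : Type u} [Group G] {A : Bool → Subgroup G} {C : Subgroup G} {𝒢 Z : Set G}
  {i j k : Bool} {g p y : G}

/-- `IsReducedProd A C i g`: `g` is a nonempty alternating product of elements of the two factors
lying outside `C`, with first syllable in `A i`. -/
inductive IsReducedProd (A : Bool → Subgroup G) (C : Subgroup G) : Bool → G → Prop
  | single {i : Bool} {b : G} : b ∈ A i → b ∉ C → IsReducedProd A C i b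
  | cons {i : Bool} {b p : G} :
      b ∈ A i → b ∉ C → IsReducedProd A C (!i) p → IsReducedProd A C i (b * p)

namespace IsAmalgamatedFreeProduct

theorem le (amal : IsAmalgamatedFreeProduct (A true) (A false) C) : ∀ i, C ≤ A i
  | true => amal.le_left
  | false => amal.le_right

theorem mem_of_mem_of_mem_not (amal : IsAmalgamatedFreeProduct (A true) (A false) C)
    (h : g ∈ A i) (h' : g ∈ A (!i)) : g ∈ C := by
  rw [← amal.inf_eq]
  cases i
  exacts [⟨h', h⟩, ⟨h, h'⟩]

theorem exists_hom_pushoutI (amal : IsAmalgamatedFreeProduct (A true) (A false) C) :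
    ∃ f : G →* Monoid.PushoutI fun i => Subgroup.inclusion (amal.le i),
      ∀ i (a : ↥(A i)), f a = Monoid.PushoutI.of i a := by
  let φ i := Subgroup.inclusion (amal.le i)
  obtain ⟨f, htrue, hfalse⟩ := amal.univ (Monoid.PushoutI φ) (Monoid.PushoutI.of (φ := φ) true)
    (Monoid.PushoutI.of (φ := φ) false) fun c hA hB =>
      have hc : c ∈ C := amal.inf_eq ▸ ⟨hA, hB⟩
      (Monoid.PushoutI.of_apply_eq_base φ true ⟨c, hc⟩).trans
        (Monoid.PushoutI.of_apply_eq_base φ false ⟨c, hc⟩).symm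
  exact ⟨f, Bool.rec hfalse htrue⟩

end IsAmalgamatedFreeProduct

namespace IsReducedProd

theorem exists_word {P : Type*} [Monoid P] (hCA : ∀ i, C ≤ A i)
    (hg : IsReducedProd A C i g) (f : G →* P) :
    ∃ w : Monoid.CoprodI.Word fun i => ↥(A i), w.fstIdx = some i ∧
      Monoid.PushoutI.Reduced (fun i => Subgroup.inclusion (hCA i)) w ∧
      Monoid.CoprodI.lift (fun i => f.comp (A i).subtype) w.prod = f g := by
  have hrange : ∀ {i : Bool} (b : ↥(A i)), (b : G) ∉ C →
      b ∉ (Subgroup.inclusion (hCA i)).range := by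
    rintro i _ hb ⟨c, rfl⟩
    exact hb c.2
  have hne : ∀ {i : Bool} (b : ↥(A i)), (b : G) ∉ C → b ≠ 1 := by
    rintro i _ hb rfl
    exact hb (one_mem C)
  induction hg with
  | @single i b hb hbC =>
    refine ⟨.cons ⟨b, hb⟩ .empty (by simp [Monoid.CoprodI.Word.fstIdx]) (hne _ hbC), by simp, ?_,
      by simp⟩
    rintro x hx
    obtain rfl := List.mem_singleton.1 hx
    exact hrange _ hbC
  | @cons i b p hb hbC _ ih =>
    obtain ⟨w, hw, hred, hprod⟩ := ih
    refine ⟨.cons ⟨b, hb⟩ w (by simp [hw]) (hne _ hbC), by simp, ?_, by simp [hprod]⟩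
    rintro x hx
    rcases List.mem_cons.1 hx with rfl | hx
    exacts [hrange _ hbC, hred x hx]

/-- Normal form theorem for amalgamated free products. -/
theorem notMem (amal : IsAmalgamatedFreeProduct (A true) (A false) C)
    (hg : IsReducedProd A C i g) : g ∉ C := by
  intro hgC
  obtain ⟨f, hf⟩ := amal.exists_hom_pushoutI
  obtain ⟨w, hw, hred, hprod⟩ := hg.exists_word amal.le f
  have hlift : Monoid.CoprodI.lift (fun i => f.comp (A i).subtype) = Monoid.PushoutI.ofCoprodI :=
    Monoid.CoprodI.ext_hom _ _ fun i => MonoidHom.ext fun a => by simp [hf]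
  have hempty := hred.eq_empty_of_mem_range (fun i => Subgroup.inclusion_injective (amal.le i)) (by
    rw [← hlift, hprod]
    refine ⟨⟨g, hgC⟩, ?_⟩
    rw [← Monoid.PushoutI.of_apply_eq_base _ true, ← hf]
    rfl)
  rw [hempty] at hw
  exact Option.some_ne_none i hw.symm

theorem notMem_not (amal : IsAmalgamatedFreeProduct (A true) (A false) C)
    (hg : IsReducedProd A C i g) : g ∉ A (!i) := by
  intro hgA
  have hprod : IsReducedProd A C (!i) (g⁻¹ * g) :=
    .cons (inv_mem hgA) (fun h => hg.notMem amal (inv_mem_iff.1 h)) ((Bool.not_not i).symm ▸ hg)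
  exact hprod.notMem amal (inv_mul_cancel g ▸ one_mem C)

theorem mul_right (hCA : ∀ i, C ≤ A i) (hg : IsReducedProd A C i g) (hy : y ∈ A k) :
    IsReducedProd A C i (g * y) ∨ g * y ∈ C ∧ y ∈ A i := by
  induction hg with
  | @single i b hb hbC =>
    by_cases hyi : y ∈ A i
    · by_cases hby : b * y ∈ C
      · exact Or.inr ⟨hby, hyi⟩
      · exact Or.inl (.single (mul_mem hb hyi) hby)
    · have hk : k = !i := Bool.eq_not_of_ne fun h => hyi (h ▸ hy)
      exact Or.inl (.cons hb hbC (.single (hk ▸ hy) fun h => hyi (hCA i h)))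
  | @cons i b p hb hbC _ ih =>
    left
    rw [mul_assoc]
    rcases ih with ih | ⟨ih, -⟩
    · exact .cons hb hbC ih
    · exact .single (mul_mem hb (hCA i ih)) fun h => hbC ((mul_mem_cancel_right ih).1 h)

/-- A path that enters the set of reduced products with first syllable in `A i` does so from `C`:
by `mul_right`, a letter can only leave this set by leading into `C`. -/
theorem exists_split (hCA : ∀ i, C ≤ A i) {l : List G} (hl : ∀ x ∈ l, ∃ k, x ∈ A k)
    (hp : ¬ IsReducedProd A C i p) (h : IsReducedProd A C i (p * l.prod)) :
    ∃ l₁ y l₂, l = l₁ ++ y :: l₂ ∧ p * l₁.prod ∈ C ∧ y ∈ A i := by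
  induction l generalizing p with
  | nil => exact absurd (mul_one p ▸ h) hp
  | cons x l ih =>
    obtain ⟨⟨k, hk⟩, hl⟩ := List.forall_mem_cons.1 hl
    by_cases hpx : IsReducedProd A C i (p * x)
    · have hexit := hpx.mul_right hCA (inv_mem hk)
      rw [mul_inv_cancel_right] at hexit
      obtain ⟨hpC, hx⟩ := hexit.resolve_left hp
      exact ⟨[], x, l, rfl, by rwa [List.prod_nil, mul_one], inv_mem_iff.1 hx⟩
    · rw [List.prod_cons, ← mul_assoc] at h
      obtain ⟨l₁, y, l₂, rfl, hpC, hy⟩ := ih hl hpx h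
      exact ⟨x :: l₁, y, l₂, rfl, by rwa [List.prod_cons, ← mul_assoc], hy⟩

end IsReducedProd

namespace IsAmalgamatedFreeProduct

theorem mem_or_isReducedProd (amal : IsAmalgamatedFreeProduct (A true) (A false) C) (g : G) :
    g ∈ C ∨ ∃ i, IsReducedProd A C i g := by
  have hstep : ∀ g y : G, (∃ k, y ∈ A k) → (g ∈ C ∨ ∃ i, IsReducedProd A C i g) →
      g * y ∈ C ∨ ∃ i, IsReducedProd A C i (g * y) := by
    rintro g y ⟨k, hy⟩ (hg | ⟨i, hg⟩)
    · exact or_iff_not_imp_left.2 fun hgy => ⟨k, .single (mul_mem (amal.le k hg) hy) hgy⟩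
    · exact (hg.mul_right amal.le hy).elim (fun h => Or.inr ⟨i, h⟩) fun h => Or.inl h.1
  have hmem : g ∈ Subgroup.closure (⋃ i, (A i : Set G)) := by
    rw [← Subgroup.iSup_eq_closure, iSup_bool_eq, amal.sup_eq_top]
    exact Subgroup.mem_top g
  induction hmem using Subgroup.closure_induction_right with
  | one => exact Or.inl (one_mem C)
  | mul_right x _ y hy ih => exact hstep x y (Set.mem_iUnion.1 hy) ih
  | mul_inv_cancel x _ y hy ih =>
    obtain ⟨k, hk⟩ := Set.mem_iUnion.1 hy
    exact hstep x y⁻¹ ⟨k, inv_mem hk⟩ ih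

theorem wordLength_prod_le_mul_length (amal : IsAmalgamatedFreeProduct (A true) (A false) C)
    (hZ : SymmGenerates Z (A j)) (hfactor : ∀ x ∈ 𝒢, ∃ k, x ∈ A k) {lam : ℕ}
    (hC : ∀ c ∈ C, wordLength Z c ≤ lam * wordLength 𝒢 c)
    (hletter : ∀ x ∈ 𝒢, x ∈ A j → wordLength Z x ≤ lam) (l : List G) (hl : IsWordOver 𝒢 l)
    (hlA : l.prod ∈ A j) : wordLength Z l.prod ≤ lam * l.length := by
  have hwordC : ∀ l, IsWordOver 𝒢 l → l.prod ∈ C → wordLength Z l.prod ≤ lam * l.length :=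
    fun l hl hlC => (hC _ hlC).trans (Nat.mul_le_mul_left lam hl.wordLength_prod_le)
  by_cases hlC : l.prod ∈ C
  · exact hwordC l hl hlC
  obtain ⟨l₁, y, l₂, rfl, hl₁C, hy⟩ := IsReducedProd.exists_split (p := 1) (i := j) amal.le
    (fun x hx => hfactor x (hl x hx)) (fun h => h.notMem amal (one_mem C))
    ((one_mul l.prod).symm ▸ .single hlA hlC)
  rw [one_mul] at hl₁C
  have hl₁ : IsWordOver 𝒢 l₁ := hl.of_subset (by simp)
  have hl₂ : IsWordOver 𝒢 l₂ := hl.of_subset fun x hx => by simp [hx]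
  rw [List.prod_append, List.prod_cons] at hlA ⊢
  have hyl₂ : y * l₂.prod ∈ A j := (mul_mem_cancel_left (amal.le j hl₁C)).1 hlA
  have hl₂A : l₂.prod ∈ A j := (mul_mem_cancel_left hy).1 hyl₂
  calc wordLength Z (l₁.prod * (y * l₂.prod))
      ≤ wordLength Z l₁.prod + (wordLength Z y + wordLength Z l₂.prod) :=
        (hZ.wordLength_mul_le (amal.le j hl₁C) hyl₂).trans
          (Nat.add_le_add_left (hZ.wordLength_mul_le hy hl₂A) _)
    _ ≤ lam * l₁.length + (lam + lam * l₂.length) := by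
        gcongr
        · exact hwordC l₁ hl₁ hl₁C
        · exact hletter y (hl y (by simp)) hy
        · exact amal.wordLength_prod_le_mul_length hZ hfactor hC hletter l₂ hl₂ hl₂A
    _ = lam * (l₁ ++ y :: l₂).length := by
        rw [List.length_append, List.length_cons]
        ring
termination_by l.length
decreasing_by grind

theorem exists_factor_le_mul (amal : IsAmalgamatedFreeProduct (A true) (A false) C)
    (h𝒢 : SymmGenerates 𝒢 ⊤) (hfin : 𝒢.Finite) (hfactor : ∀ x ∈ 𝒢, ∃ k, x ∈ A k)
    (hZ : SymmGenerates Z (A j)) {lam : ℕ}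
    (hC : ∀ c ∈ C, wordLength Z c ≤ lam * wordLength 𝒢 c) :
    ∃ B : ℕ, ∀ a ∈ A j, wordLength Z a ≤ B * wordLength 𝒢 a := by
  obtain ⟨M, hM⟩ := (hfin.image (wordLength Z)).bddAbove
  refine ⟨lam + M, fun a ha => ?_⟩
  obtain ⟨l, hl, rfl⟩ := h𝒢.exists_isGeodesicWord (Subgroup.mem_top a)
  rw [← hl.2]
  refine amal.wordLength_prod_le_mul_length hZ hfactor (fun c hc => (hC c hc).trans ?_)
    (fun x hx _ => (hM ⟨x, hx, rfl⟩).trans (Nat.le_add_left M lam)) l hl.1 ha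
  gcongr
  exact Nat.le_add_right lam M

/-- A geodesic from `1` to `a * q` passes through `a * C`. -/
theorem exists_wordLength_add_le (amal : IsAmalgamatedFreeProduct (A true) (A false) C)
    (h𝒢 : SymmGenerates 𝒢 ⊤) (hfactor : ∀ x ∈ 𝒢, ∃ k, x ∈ A k) {a q : G} (ha : a ∈ A i)
    (hq : q = 1 ∨ IsReducedProd A C (!i) q) :
    ∃ c ∈ C, wordLength 𝒢 (a * c⁻¹) + wordLength 𝒢 (c * q) ≤ wordLength 𝒢 (a * q) := by
  rcases hq with rfl | hq
  · exact ⟨1, one_mem C, by simp [wordLength_one]⟩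
  obtain ⟨l, hl, hprod⟩ := h𝒢.exists_isGeodesicWord (Subgroup.mem_top (a * q))
  obtain ⟨l₁, y, l₂, rfl, hC, -⟩ := IsReducedProd.exists_split (p := a⁻¹) (i := !i) amal.le
    (fun x hx => hfactor x (hl.1 x hx))
    (fun h => h.notMem_not amal ((Bool.not_not i).symm ▸ inv_mem ha))
    (by rwa [hprod, inv_mul_cancel_left])
  refine ⟨(a⁻¹ * l₁.prod)⁻¹, inv_mem hC, ?_⟩
  have hlen := hl.2
  have hle₁ := (hl.1.of_subset (l₂ := l₁) (by simp)).wordLength_prod_le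
  have hle₂ := (hl.1.of_subset (l₂ := y :: l₂) (by simp)).wordLength_prod_le
  have hsuffix : (a⁻¹ * l₁.prod)⁻¹ * q = (y :: l₂).prod := by
    rw [List.prod_append] at hprod
    rw [mul_inv_rev, inv_inv, mul_assoc, ← hprod, inv_mul_cancel_left]
  rw [hprod, List.length_append] at hlen
  rw [hsuffix, ← hlen, inv_inv, mul_inv_cancel_left]
  exact Nat.add_le_add hle₁ hle₂

end IsAmalgamatedFreeProduct

end Amalgam

section NormalForm

variable {G : Type u} [Group G] {A : Bool → Subgroup G} {C : Subgroup G} {X : Bool → Set G}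
  {𝒢 : Set G} {i : Bool} {L : List (List G)}

/-- A syllable of a normal form: a geodesic word over `X` whose value lies outside `C` and is
shortest in its coset `C * u.prod`. -/
structure IsSyllable (X : Set G) (C : Subgroup G) (u : List G) : Prop where
  isGeodesicWord : IsGeodesicWord X u
  prod_notMem : u.prod ∉ C
  isCosetMin : IsCosetMin (wordLength X) C u.prod

/-- A list of syllables alternating between the two alphabets, the first of which (if any) is a word
over `X i`. -/
inductive IsSyllableList (X : Bool → Set G) (C : Subgroup G) : Bool → List (List G) → Prop
  | nil (i : Bool) : IsSyllableList X C i []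
  | cons {i : Bool} {u : List G} {L : List (List G)} :
      IsSyllable (X i) C u → IsSyllableList X C (!i) L → IsSyllableList X C i (u :: L)

/-- A geodesic word over some `X i`, which plays the role of `u₀` and may represent an element of
`C`, followed by alternating syllables starting with one over `X (!i)`. -/
def IsNormalWord (X : Bool → Set G) (C : Subgroup G) (v : List G) : Prop :=
  ∃ i u L, v = u ++ L.flatten ∧ IsGeodesicWord (X i) u ∧ IsSyllableList X C (!i) L

theorem IsSyllable.of_prefix {X : Set G} {A : Subgroup G} (hX : SymmGenerates X A) (hCA : C ≤ A)
    {u v : List G} (hu : IsSyllable X C u) (hv : v <+: u) (hne : v ≠ []) : IsSyllable X C v := by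
  have hle : ∀ c ∈ C, v.length ≤ wordLength X (c * v.prod) := fun c hc => by
    have htake := hu.isGeodesicWord.length_le_of_isCosetMin hX hCA hu.isCosetMin hv.length_le hc
    rwa [← List.prefix_iff_eq_take.1 hv] at htake
  have hgeod := hu.isGeodesicWord.of_infix hv.isInfix
  refine ⟨hgeod, fun hvC => hne ?_, fun c hc => hgeod.2 ▸ hle c hc⟩
  have hlen := hle _ (inv_mem hvC)
  rwa [inv_mul_cancel, wordLength_one, Nat.le_zero, List.length_eq_zero_iff] at hlen

namespace IsSyllableList

theorem prod_flatten (hX : ∀ i, SymmGenerates (X i) (A i)) (hL : IsSyllableList X C i L) :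
    L.flatten.prod = 1 ∨ IsReducedProd A C i L.flatten.prod := by
  induction hL with
  | nil i => exact Or.inl rfl
  | @cons i u L hu _ ih =>
    have huA := (hX i).prod_mem hu.isGeodesicWord.1
    rw [List.flatten_cons, List.prod_append]
    right
    rcases ih with ih | ih
    · rw [ih, mul_one]
      exact .single huA hu.prod_notMem
    · exact .cons huA hu.prod_notMem ih

theorem isWordOver (hX𝒢 : ∀ i, X i ⊆ 𝒢) (hL : IsSyllableList X C i L) :
    IsWordOver 𝒢 L.flatten := by
  induction hL with
  | nil _ => exact isGeodesicWord_nil.1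
  | @cons i u L hu _ ih => exact (hu.isGeodesicWord.1.mono (hX𝒢 i)).append ih

theorem isSyllable_getD (hL : IsSyllableList X C i L) {k : ℕ} (hk : k < L.length) :
    IsSyllable (X (not^[k] i)) C (L.getD k []) := by
  induction hL generalizing k with
  | nil i => exact absurd hk k.not_lt_zero
  | cons hu _ ih =>
    cases k with
    | zero => exact hu
    | succ k => exact ih (Nat.lt_of_succ_lt_succ hk)

theorem of_prefix (hX : ∀ i, SymmGenerates (X i) (A i)) (hCA : ∀ i, C ≤ A i)
    (hL : IsSyllableList X C i L) {v : List G} (hv : v <+: L.flatten) :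
    ∃ L', v = L'.flatten ∧ IsSyllableList X C i L' := by
  induction hL generalizing v with
  | nil i => exact ⟨[], List.prefix_nil.1 hv, .nil i⟩
  | @cons i u L hu _ ih =>
    rcases List.prefix_or_prefix_of_prefix hv (List.prefix_append u L.flatten) with hvu | ⟨t, rfl⟩
    · by_cases hne : v = []
      · exact ⟨[], hne, .nil i⟩
      · exact ⟨[v], List.flatten_singleton.symm,
          .cons (hu.of_prefix (hX i) (hCA i) hvu hne) (.nil _)⟩
    · obtain ⟨L', rfl, hL'⟩ := ih ((List.prefix_append_right_inj u).1 hv)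
      exact ⟨u :: L', rfl, .cons hu hL'⟩

end IsSyllableList

namespace IsNormalWord

theorem isWordOver (hX𝒢 : ∀ i, X i ⊆ 𝒢) {v : List G} (hv : IsNormalWord X C v) :
    IsWordOver 𝒢 v := by
  obtain ⟨i, u, L, rfl, hu, hL⟩ := hv
  exact (hu.1.mono (hX𝒢 i)).append (hL.isWordOver hX𝒢)

theorem of_infix (hX : ∀ i, SymmGenerates (X i) (A i)) (hCA : ∀ i, C ≤ A i) {v w : List G}
    (hw : IsNormalWord X C w) (hv : v <:+: w) : IsNormalWord X C v := by
  obtain ⟨i, u, L, rfl, hu, hL⟩ := hw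
  induction L generalizing i u with
  | nil =>
    rw [List.flatten_nil, List.append_nil] at hv
    exact ⟨i, v, [], (List.append_nil v).symm, hu.of_infix hv, .nil _⟩
  | cons u' L ih =>
    rcases List.infix_append_iff.1 hv with hvu | hvL | ⟨t, s, rfl, htu, hs⟩
    · exact ⟨i, v, [], (List.append_nil v).symm, hu.of_infix hvu, .nil _⟩
    · cases hL with
      | cons hu' hL => exact ih _ u' hvL hu'.isGeodesicWord hL
    · obtain ⟨L', rfl, hL'⟩ := hL.of_prefix hX hCA hs
      exact ⟨i, t, L', rfl, hu.of_infix htu.isInfix, hL'⟩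

end IsNormalWord

theorem IsReducedProd.exists_syllables (hX : ∀ i, SymmGenerates (X i) (A i)) (hCA : ∀ i, C ≤ A i)
    {g : G} (hg : IsReducedProd A C i g) :
    ∃ u L, IsGeodesicWord (X i) u ∧ u.prod ∉ C ∧ IsSyllableList X C (!i) L ∧
      u.prod * L.flatten.prod = g := by
  induction hg with
  | @single i b hb hbC =>
    obtain ⟨u, hu, rfl⟩ := (hX i).exists_isGeodesicWord hb
    exact ⟨u, [], hu, hbC, .nil _, mul_one u.prod⟩
  | @cons i b p hb hbC _ ih =>
    obtain ⟨u, L, hu, huC, hL, rfl⟩ := ih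
    obtain ⟨c, hc, a, hmin, hca⟩ := IsCosetMin.exists_eq_mul (wordLength (X !i)) C u.prod
    rw [hca] at huC ⊢
    have ha : a ∈ A (!i) :=
      (mul_mem_cancel_left (hCA _ hc)).1 (hca ▸ (hX _).prod_mem hu.1)
    obtain ⟨v, hv, rfl⟩ := (hX _).exists_isGeodesicWord ha
    obtain ⟨w, hw, hwprod⟩ := (hX i).exists_isGeodesicWord (mul_mem hb (hCA i hc))
    refine ⟨w, v :: L, hw, ?_, .cons ⟨hv, ?_, hmin⟩ hL, ?_⟩
    · rw [hwprod]
      exact fun h => hbC ((mul_mem_cancel_right hc).1 h)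
    · exact fun h => huC (mul_mem hc h)
    · rw [List.flatten_cons, List.prod_append, hwprod]
      simp only [mul_assoc]

variable {ℓ : G → ℕ} {B K Λ Λ' δ : ℕ}

/-- Cutting a geodesic for `c * L.flatten.prod` between the syllables of `L` makes the potentials
`B * ℓ` of the successive elements of `C` telescope. -/
theorem IsSyllableList.length_le (amal : IsAmalgamatedFreeProduct (A true) (A false) C)
    (hX : ∀ i, SymmGenerates (X i) (A i)) (h𝒢 : SymmGenerates 𝒢 ⊤)
    (hfactor : ∀ x ∈ 𝒢, ∃ k, x ∈ A k) (hΛ : ∀ g, ℓ g ≤ Λ * wordLength 𝒢 g)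
    (hK : ∀ i, HasSyllableBound ℓ (X i) (A i) C B K) (hL : IsSyllableList X C i L) {c : G}
    (hc : c ∈ C) :
    B * ℓ c + L.flatten.length ≤
      (B * Λ + K * Λ + K) * wordLength 𝒢 (c * L.flatten.prod) := by
  induction hL generalizing c with
  | nil _ =>
    rw [List.flatten_nil, List.length_nil, add_zero, List.prod_nil, mul_one]
    calc B * ℓ c ≤ B * (Λ * wordLength 𝒢 c) := Nat.mul_le_mul_left B (hΛ c)
      _ = B * Λ * wordLength 𝒢 c := (mul_assoc _ _ _).symm
      _ ≤ (B * Λ + K * Λ + K) * wordLength 𝒢 c := Nat.mul_le_mul_right _ (by omega)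
  | @cons i u L hu hL ih =>
    have huA := (hX i).prod_mem hu.isGeodesicWord.1
    obtain ⟨c', hc', hsplit⟩ := amal.exists_wordLength_add_le h𝒢 hfactor
      (mul_mem (amal.le i hc) huA) (hL.prod_flatten hX)
    have hsyl := hK i _ huA hu.isCosetMin c hc c' hc'
    set e := c * u.prod * c'⁻¹
    have hpos : 1 ≤ wordLength 𝒢 e := by
      refine Nat.one_le_iff_ne_zero.2 fun h0 => hu.prod_notMem ?_
      have he : e ∈ C := h𝒢.eq_one_of_wordLength_eq_zero (Subgroup.mem_top e) h0 ▸ one_mem C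
      exact (mul_mem_cancel_left hc).1 ((mul_mem_cancel_right (inv_mem hc')).1 he)
    rw [List.flatten_cons, List.length_append, List.prod_append, hu.isGeodesicWord.2, ← mul_assoc]
    calc B * ℓ c + (wordLength (X i) u.prod + L.flatten.length)
        ≤ K * ℓ e + K + (B * ℓ c' + L.flatten.length) := by omega
      _ ≤ K * (Λ * wordLength 𝒢 e) + K * wordLength 𝒢 e +
            (B * Λ + K * Λ + K) * wordLength 𝒢 (c' * L.flatten.prod) := by
          gcongr
          exacts [hΛ e, Nat.le_mul_of_pos_right K hpos, ih hc']
      _ ≤ (B * Λ + K * Λ + K) * (wordLength 𝒢 e + wordLength 𝒢 (c' * L.flatten.prod)) := by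
          linarith [Nat.zero_le (B * Λ * wordLength 𝒢 e)]
      _ ≤ (B * Λ + K * Λ + K) * wordLength 𝒢 (c * u.prod * L.flatten.prod) :=
          Nat.mul_le_mul_left _ hsplit

theorem IsNormalWord.length_le (amal : IsAmalgamatedFreeProduct (A true) (A false) C)
    (hX : ∀ i, SymmGenerates (X i) (A i)) (h𝒢 : SymmGenerates 𝒢 ⊤)
    (hfactor : ∀ x ∈ 𝒢, ∃ k, x ∈ A k) (h : IsLength ℓ) (hΛ : ∀ g, ℓ g ≤ Λ * wordLength 𝒢 g)
    (hB : ∀ i, ∀ a ∈ A i, wordLength (X i) a ≤ B * ℓ a)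
    (hK : ∀ i, HasSyllableBound ℓ (X i) (A i) C B K) {v : List G} (hv : IsNormalWord X C v) :
    v.length ≤ (B * Λ + K * Λ + K) * wordLength 𝒢 v.prod := by
  obtain ⟨i, u, L, rfl, hu, hL⟩ := hv
  have huA := (hX i).prod_mem hu.1
  obtain ⟨c, hc, hsplit⟩ := amal.exists_wordLength_add_le h𝒢 hfactor huA (hL.prod_flatten hX)
  set e := u.prod * c⁻¹
  have hu_le : ℓ u.prod ≤ ℓ e + ℓ c := by
    rw [← inv_mul_cancel_right u.prod c]
    exact h.mul _ _
  rw [List.length_append, List.prod_append, hu.2]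
  calc wordLength (X i) u.prod + L.flatten.length
      ≤ B * (ℓ e + ℓ c) + L.flatten.length :=
        Nat.add_le_add_right ((hB i _ huA).trans (Nat.mul_le_mul_left B hu_le)) _
    _ = B * ℓ e + (B * ℓ c + L.flatten.length) := by ring
    _ ≤ B * (Λ * wordLength 𝒢 e) +
          (B * Λ + K * Λ + K) * wordLength 𝒢 (c * L.flatten.prod) := by
        gcongr
        exacts [hΛ e, hL.length_le amal hX h𝒢 hfactor hΛ hK hc]
    _ ≤ (B * Λ + K * Λ + K) * (wordLength 𝒢 e + wordLength 𝒢 (c * L.flatten.prod)) := by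
        linarith [Nat.zero_le ((K * Λ + K) * wordLength 𝒢 e)]
    _ ≤ (B * Λ + K * Λ + K) * wordLength 𝒢 (u.prod * L.flatten.prod) :=
        Nat.mul_le_mul_left _ hsplit

theorem IsAmalgamatedFreeProduct.exists_factor_le_mul_hyperbolicLength
    (amal : IsAmalgamatedFreeProduct (A true) (A false) C) (hvc : IsVirtuallyCyclic ↥C)
    (hX : SymmGenerates (X i) (A i)) (h𝒢 : SymmGenerates 𝒢 ⊤) (hfin : 𝒢.Finite)
    (hfactor : ∀ x ∈ 𝒢, ∃ k, x ∈ A k) (h : IsHyperbolicLength ℓ δ)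
    (hΛ : ∀ g, ℓ g ≤ Λ * wordLength 𝒢 g) (hΛ' : ∀ g, wordLength 𝒢 g ≤ Λ' * ℓ g) :
    ∃ B : ℕ, ∀ a ∈ A i, wordLength (X i) a ≤ B * ℓ a := by
  have hone : ∀ g, ℓ g = 0 → g = 1 := fun g h0 =>
    h𝒢.eq_one_of_wordLength_eq_zero (Subgroup.mem_top g) (Nat.le_zero.1 (by simpa [h0] using hΛ' g))
  obtain ⟨lam, hlam⟩ := hvc.exists_le_mul h hone (hX.isLength_subtype (amal.le i))
  obtain ⟨B, hB⟩ := amal.exists_factor_le_mul h𝒢 hfin hfactor hX (lam := lam * Λ) fun c hc =>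
    (hlam ⟨c, hc⟩).trans ((Nat.mul_le_mul_left lam (hΛ c)).trans_eq (mul_assoc _ _ _).symm)
  exact ⟨B * Λ', fun a ha => (hB a ha).trans
    ((Nat.mul_le_mul_left B (hΛ' a)).trans_eq (mul_assoc _ _ _).symm)⟩

theorem exists_isNormalWord_length_le (amal : IsAmalgamatedFreeProduct (A true) (A false) C)
    (hG : IsWordHyperbolic G) (hvc : IsVirtuallyCyclic ↥C)
    (hX : ∀ i, SymmGenerates (X i) (A i)) (h𝒢 : SymmGenerates 𝒢 ⊤) (hfin : 𝒢.Finite)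
    (hX𝒢 : ∀ i, X i ⊆ 𝒢) (hfactor : ∀ x ∈ 𝒢, ∃ k, x ∈ A k) :
    ∃ K : ℕ, ∀ v, IsNormalWord X C v → v.length ≤ K * wordLength 𝒢 v.prod := by
  obtain ⟨Y, hY, δ, hℓ⟩ := hG.exists_isHyperbolicLength
  obtain ⟨Λ, hΛ⟩ := h𝒢.exists_le_mul_wordLength hfin hℓ.toIsLength
  obtain ⟨Λ', hΛ'⟩ := hY.symmGenerates.exists_le_mul_wordLength hY.1 h𝒢.isLength
  simp only [Subgroup.mem_top, forall_const] at hΛ hΛ'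
  have hΛX : ∀ i, ∀ a ∈ A i, wordLength Y a ≤ Λ * wordLength (X i) a := fun i a ha =>
    (hΛ a).trans (Nat.mul_le_mul_left Λ ((hX i).wordLength_anti (hX𝒢 i) ha))
  choose f hf using fun i =>
    amal.exists_factor_le_mul_hyperbolicLength hvc (hX i) h𝒢 hfin hfactor hℓ hΛ hΛ'
  obtain ⟨lam, hlam⟩ := (Set.finite_range f).bddAbove
  have hB : ∀ i, ∀ a ∈ A i, wordLength (X i) a ≤ lam * wordLength Y a := fun i a ha =>
    (hf i a ha).trans (Nat.mul_le_mul_right _ (hlam ⟨i, rfl⟩))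
  obtain ⟨hC, hsep⟩ := hvc.isContracting_and_hasSeparatedCosets hℓ
  choose κ hκ using fun i =>
    hC.exists_hasSyllableBound hsep hℓ.toIsLength (hX i) (amal.le i) (hΛX i) (hB i)
  obtain ⟨K, hK⟩ := (Set.finite_range κ).bddAbove
  exact ⟨2 * lam * Λ + K * Λ + K, fun v hv => hv.length_le amal hX h𝒢 hfactor hℓ.toIsLength hΛ
    (fun i a ha => (hB i a ha).trans (Nat.mul_le_mul_right _ (Nat.le_mul_of_pos_left lam two_pos)))
    (fun i => (hκ i).mono (hK ⟨i, rfl⟩))⟩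

theorem exists_isNormalWord_isQuasigeodesicWord
    (amal : IsAmalgamatedFreeProduct (A true) (A false) C) (hG : IsWordHyperbolic G)
    (hvc : IsVirtuallyCyclic ↥C) (hX : ∀ i, SymmGenerates (X i) (A i))
    (hfin : ∀ i, (X i).Finite) :
    ∃ K : ℝ, 0 < K ∧ ∀ v, IsNormalWord X C v → IsQuasigeodesicWord (X true ∪ X false) K v := by
  have hX𝒢 : ∀ i, X i ⊆ X true ∪ X false := Bool.rec Set.subset_union_right Set.subset_union_left
  have hfactor : ∀ x ∈ X true ∪ X false, ∃ k, x ∈ A k := fun x hx =>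
    hx.elim (fun h => ⟨true, (hX true).mem h⟩) fun h => ⟨false, (hX false).mem h⟩
  obtain ⟨K, hK⟩ := exists_isNormalWord_length_le amal hG hvc hX
    (amal.sup_eq_top ▸ (hX true).union (hX false)) ((hfin true).union (hfin false)) hX𝒢 hfactor
  refine ⟨K + 1, by positivity, fun w hw => ⟨hw.isWordOver hX𝒢, fun v hv => ?_⟩⟩
  calc (v.length : ℝ) ≤ K * wordLength (X true ∪ X false) v.prod := by
        exact_mod_cast hK v (hw.of_infix hX amal.le hv)
    _ ≤ (K + 1) * wordLength (X true ∪ X false) v.prod + (K + 1) := by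
        linarith [Nat.cast_nonneg (α := ℝ) K,
          Nat.cast_nonneg (α := ℝ) (wordLength (X true ∪ X false) v.prod)]

theorem map_range_getD {α : Type*} (l : List α) (d : α) :
    ((List.range l.length).map fun k => l.getD k d) = l :=
  List.ext_getElem (by simp) fun k _ hk => by simp [hk]

/-- Since a syllable over `X i` lies in `A i` and outside `C`, its factor determines the parity of
its position. -/
theorem IsSyllableList.getD_prod_mem_not (amal : IsAmalgamatedFreeProduct (A true) (A false) C)
    (hX : ∀ i, SymmGenerates (X i) (A i)) {u : List G} (hu : IsGeodesicWord (X i) u)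
    (huC : u.prod ∉ C) (hL : IsSyllableList X C (!i) L) {k : ℕ} (hk : k < L.length) {i' : Bool}
    (hi' : (L.getD k []).prod ∈ A i') :
    ((u :: L).getD k []).prod ∈ A (!i') ∧ ((u :: L).getD k []).prod ∉ C := by
  have hsyl := hL.isSyllable_getD hk
  obtain rfl : i' = not^[k + 1] i := by
    by_contra hne
    have hmem := (hX _).prod_mem hsyl.isGeodesicWord.1
    rw [← Function.iterate_succ_apply, Bool.eq_not_of_ne (Ne.symm hne)] at hmem
    exact hsyl.prod_notMem (amal.mem_of_mem_of_mem_not hi' hmem)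
  rw [Function.iterate_succ_apply', Bool.not_not]
  cases k with
  | zero => exact ⟨(hX i).prod_mem hu.1, huC⟩
  | succ k =>
    have hprev := hL.isSyllable_getD (Nat.lt_of_succ_lt hk)
    exact ⟨(hX _).prod_mem hprev.isGeodesicWord.1, hprev.prod_notMem⟩

end NormalForm

theorem normal_form_quasigeodesic_general {G : Type u} [Group G]
    (A : Bool → Subgroup G) (C : Subgroup G)
    (hG : IsWordHyperbolic G)
    (amal : IsAmalgamatedFreeProduct (A true) (A false) C)
    (hvc : IsVirtuallyCyclic ↥C)
    (X : Bool → Set G)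
    (hXfin : ∀ i, (X i).Finite) (hXinv : ∀ i, ∀ x ∈ X i, x⁻¹ ∈ X i)
    (hXgen : ∀ i, Subgroup.closure (X i) = A i) :
    ∃ K : ℝ, 0 < K ∧
      ∀ g : G, ∃ (s : ℕ) (uw : ℕ → List G) (j : ℕ → Bool),
        ((List.range (s + 1)).map uw).flatten.prod = g ∧
        IsQuasigeodesicWord (X true ∪ X false) K ((List.range (s + 1)).map uw).flatten ∧
        (∀ k ≤ s, IsGeodesicWord (X (j k)) (uw k)) ∧
        (∀ k, 0 < k → k ≤ s →
          (uw k).prod ∉ C ∧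
          ShortestIn (X (j k)) ((uw k).prod) {x | ∃ c ∈ C, x = c * (uw k).prod}) ∧
        (∀ k, 0 < k → k ≤ s → ∀ i : Bool,
          (uw k).prod ∈ A i → (uw k).prod ∉ C →
          (uw (k - 1)).prod ∈ A (!i) ∧ (uw (k - 1)).prod ∉ C) ∧
        (s = 0 → g ∈ C → IsGeodesicWord (X true) (uw 0)) := by
  have hX : ∀ i, SymmGenerates (X i) (A i) := fun i => ⟨hXinv i, hXgen i⟩
  obtain ⟨K, hK, hquasi⟩ := exists_isNormalWord_isQuasigeodesicWord amal hG hvc hX hXfin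
  refine ⟨K, hK, fun g => ?_⟩
  rcases amal.mem_or_isReducedProd g with hgC | ⟨i, hg⟩
  · obtain ⟨u, hu, rfl⟩ := (hX true).exists_isGeodesicWord (amal.le true hgC)
    refine ⟨0, fun _ => u, fun _ => true, by simp, ?_, fun _ _ => hu, ?_, ?_, fun _ _ => hu⟩
    · simpa using hquasi u ⟨true, u, [], (List.append_nil u).symm, hu, .nil _⟩
    all_goals intros; omega
  · obtain ⟨u, L, hu, huC, hL, rfl⟩ := hg.exists_syllables hX amal.le
    have hmap := map_range_getD (u :: L) []
    rw [List.length_cons] at hmap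
    refine ⟨L.length, fun k => (u :: L).getD k [], fun k => not^[k] i, ?_, ?_, ?_, ?_, ?_,
      fun _ h => absurd h (hg.notMem amal)⟩
    · rw [hmap, List.flatten_cons, List.prod_append]
    · rw [hmap, List.flatten_cons]
      exact hquasi _ ⟨i, u, L, rfl, hu, hL⟩
    · rintro (_ | k) hk
      exacts [hu, (hL.isSyllable_getD hk).isGeodesicWord]
    · rintro (_ | k) hk0 hk
      · exact absurd hk0 (lt_irrefl 0)
      · have hsyl := hL.isSyllable_getD hk
        exact ⟨hsyl.prod_notMem, shortestIn_coset_iff.2 hsyl.isCosetMin⟩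
    · rintro (_ | k) hk0 hk i' hi' -
      · exact absurd hk0 (lt_irrefl 0)
      · exact hL.getD_prod_mem_not amal hX hu huC hk hi'

/-- **Lemma 3.1(1).** Every element of the amalgam has a quasigeodesic representative in
alternating normal form with coset-shortest syllables. -/
theorem normal_form_quasigeodesic {G : Type u} [Group G]
    (A : Bool → Subgroup G) (C : Subgroup G)
    (hG : IsWordHyperbolic G)
    (amal : IsAmalgamatedFreeProduct (A true) (A false) C)
    (hvc : IsVirtuallyCyclic ↥C)
    (X : Bool → Set G) (𝒞 : Set G)
    (h𝒞fin : 𝒞.Finite) (h𝒞C : 𝒞 ⊆ (C : Set G)) (h𝒞inv : ∀ c ∈ 𝒞, c⁻¹ ∈ 𝒞)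
    (h𝒞gen : Subgroup.closure 𝒞 = C)
    (hXfin : ∀ i, (X i).Finite) (hXinv : ∀ i, ∀ x ∈ X i, x⁻¹ ∈ X i)
    (hXsub : ∀ i, X i ⊆ (A i : Set G)) (hXgen : ∀ i, Subgroup.closure (X i) = A i)
    (hX𝒞 : ∀ i, 𝒞 ⊆ X i) :
    ∃ K : ℝ, 0 < K ∧
      ∀ g : G, ∃ (s : ℕ) (uw : ℕ → List G) (j : ℕ → Bool),
        ((List.range (s + 1)).map uw).flatten.prod = g ∧
        IsQuasigeodesicWord (X true ∪ X false) K ((List.range (s + 1)).map uw).flatten ∧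
        (∀ k ≤ s, IsGeodesicWord (X (j k)) (uw k)) ∧
        (∀ k, 0 < k → k ≤ s →
          (uw k).prod ∉ C ∧
          ShortestIn (X (j k)) ((uw k).prod) {x | ∃ c ∈ C, x = c * (uw k).prod}) ∧
        (∀ k, 0 < k → k ≤ s → ∀ i : Bool,
          (uw k).prod ∈ A i → (uw k).prod ∉ C →
          (uw (k - 1)).prod ∈ A (!i) ∧ (uw (k - 1)).prod ∉ C) ∧
        (s = 0 → g ∈ C → IsGeodesicWord (X true) (uw 0)) :=
  normal_form_quasigeodesic_general A C hG amal hvc X hXfin hXinv hXgen
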